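/- Assume f satisfies (f1), (f2) with constant B ∈ [1,∞), and assumption (1.1a) with respect to the model pair (g, v, G); assume in addition that f is C¹ on [0,∞) with f(s) > 0, f'(s) > 0 and F(s) < ∞ for all s > 0. Then there exist R > 0 and a twice continuously differentiable function u : (0,R] → ℝ such that u(t) > 0 for t ∈ (0,R), u(R) = 0, u''(t) + u'(t)/t + f(u(t)) = 0 for all t ∈ (0,R), u(t) → ∞ as t → 0⁺, and there exist r₀ ∈ (0,R) and C > 0 with |u(t) − ũ(t)| ≤ C · f(ũ(t)) · F(ũ(t)) · sup_{0 < s ≤ t} ( R₁(s) + R₂(s) ) for all t ∈ (0,r₀). -/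

import Mathlib

open MeasureTheory Filter

/-- `Fint f s = ∫_s^∞ dτ / f(τ)`. -/
noncomputable def Fint (f : ℝ → ℝ) (s : ℝ) : ℝ := ∫ τ in Set.Ioi s, 1 / f τ

/-- `1/B₁[f](s) = (−log F(s))·(1 − f'(s)·F(s))`, with `G` playing the role of `F`. -/
noncomputable def invB1 (f G : ℝ → ℝ) (s : ℝ) : ℝ :=
  (-Real.log (G s)) * (1 - deriv f s * G s)

/-- `1/B₂[f](s) = f'(s)·F(s)·(log F(s))²·(f(s)·f''(s)·F(s)/f'(s) − 1)`,
with `G` playing the role of `F`. -/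
noncomputable def invB2 (f G : ℝ → ℝ) (s : ℝ) : ℝ :=
  deriv f s * G s * (Real.log (G s)) ^ 2 *
    (f s * deriv (deriv f) s * G s / deriv f s - 1)

/-- The model singular solution `v`. -/
noncomputable def modelv (B t : ℝ) : ℝ :=
  if B = 1 then Real.log (-2 * Real.log t) else (-2 * Real.log t) ^ ((B - 1) / B)

/-- The model nonlinearity `g`. -/
noncomputable def modelg (B s : ℝ) : ℝ :=
  if B = 1 then 4 * Real.exp (Real.exp s - 2 * s)
  else (4 / (B * (B / (B - 1)))) * s ^ (1 - 2 * (B / (B - 1))) * Real.exp (s ^ (B / (B - 1)))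

/-- The model function `G(s) = ∫_s^∞ dτ/g(τ)` in closed form. -/
noncomputable def modelG (B s : ℝ) : ℝ :=
  if B = 1 then (1 / 4) * (Real.exp s + 1) * Real.exp (-Real.exp s)
  else (B / 4) * (s ^ (B / (B - 1)) + 1) * Real.exp (-(s ^ (B / (B - 1))))

/-- The Emden–Fowler model profile `ψ`. -/
noncomputable def modelpsi (B ρ : ℝ) : ℝ :=
  if B = 1 then Real.log (ρ - 1) else (ρ - 1) ^ ((B - 1) / B)

/-- `R₁(t) = |1/B₁[f](ũ(t)) − 1/B₁[g](v(t))|`. -/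
noncomputable def R1 (f ut : ℝ → ℝ) (B t : ℝ) : ℝ :=
  |invB1 f (Fint f) (ut t) - invB1 (modelg B) (modelG B) (modelv B t)|

/-- `R₂(t) = |1/B₂[f](ũ(t)) − 1/B₂[g](v(t))|`. -/
noncomputable def R2 (f ut : ℝ → ℝ) (B t : ℝ) : ℝ :=
  |invB2 f (Fint f) (ut t) - invB2 (modelg B) (modelG B) (modelv B t)|

/-!
In the Emden–Fowler variable `r = 1 - 2 log t` the radial equation reads
`U'' + f(U) e^{1 - r} / 4 = 0`. Let `S` invert `-log F`. The model profile corresponds to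
`ũ = S(Y(r))` with `Y(r) = -log G(ψ(r))`, so we look for `U = S(Y(r) + φ(r))`; the deviation `φ`
then satisfies a second-order equation whose coefficients differ from those of the exact model by
`R₁` and `R₂`. Its linear part is essentially the oscillator `φ'' = -φ / (B r)`. In the complex
unknown `ζ = a + i Q` built from `φ` and `φ'` the oscillation is a rotation `-i ζ / √(B r)`, which a
phase factor removes; in the time `log r` what remains is `ζ' = κ ζ + (perturbation)`. Passing to
`ζ` costs a factor `√r` on the nonlinear terms, and (1.1a) is what still keeps their Lipschitz
constant below `κ > 0`. The contraction principle then gives a bounded solution, of the size of the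
perturbation at `ζ = 0`.

The resulting `U` tends to infinity, hence has positive slope at some time. Going backwards in `r`,
`U` is concave while positive, so it must reach zero at a finite `r`, and this zero gives `R`.
-/

theorem hasDerivAt_integral_Ioi {E : Type*} [NormedAddCommGroup E] [NormedSpace ℝ E]
    [CompleteSpace E] {h : ℝ → E} {c r : ℝ} (hc : ContinuousOn h (Set.Ioi c))
    (hint : IntegrableOn h (Set.Ioi c)) (hr : c < r) :
    HasDerivAt (fun x => ∫ s in Set.Ioi x, h s) (-h r) r := by
  have htail : (fun x => ∫ s in Set.Ioi x, h s) =ᶠ[nhds r]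
      fun x => (∫ s in Set.Ioi c, h s) - ∫ s in c..x, h s := by
    filter_upwards [lt_mem_nhds hr] with x hx
    rw [← intervalIntegral.integral_Ioi_sub_Ioi' hint
      (hint.mono_set (Set.Ioi_subset_Ioi hx.le)), sub_sub_cancel]
  have hprim : HasDerivAt (fun x => ∫ s in c..x, h s) (h r) r := by
    refine intervalIntegral.integral_hasDerivAt_right ?_
      (hc.stronglyMeasurableAtFilter isOpen_Ioi r hr) (hc.continuousAt (Ioi_mem_nhds hr))
    rw [intervalIntegrable_iff_integrableOn_Ioc_of_le hr.le]
    exact hint.mono_set fun x hx => hx.1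
  exact (hprim.const_sub _).congr_of_eventuallyEq htail

/-! ### Bounded solutions of semilinear equations -/

section ExpResolvent

variable {E : Type*} [NormedAddCommGroup E] [NormedSpace ℝ E]

/-- The operator `(κ - d/dt)⁻¹` on bounded continuous functions, as an integral over the future
of `t`. -/
noncomputable def expResolvent (κ : ℝ) (G : ℝ → E) (t : ℝ) : E :=
  ∫ s in Set.Ioi (0 : ℝ), Real.exp (-κ * s) • G (t + s)

theorem norm_exp_smul_le {κ M s : ℝ} {x : E} (hx : ‖x‖ ≤ M) :
    ‖Real.exp (-κ * s) • x‖ ≤ Real.exp (-κ * s) * M := by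
  rw [norm_smul, Real.norm_of_nonneg (Real.exp_pos _).le]
  exact mul_le_mul_of_nonneg_left hx (Real.exp_pos _).le

theorem integrableOn_exp_smul {κ M c : ℝ} (hκ : 0 < κ) {G : ℝ → E} (hG : Continuous G)
    (hM : ∀ s, ‖G s‖ ≤ M) : IntegrableOn (fun s => Real.exp (-κ * s) • G s) (Set.Ioi c) :=
  ((exp_neg_integrableOn_Ioi c hκ).mul_const M).mono'
    (by fun_prop) (Eventually.of_forall fun s => norm_exp_smul_le (hM s))

theorem norm_expResolvent_le {κ M t : ℝ} (hκ : 0 < κ) {G : ℝ → E}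
    (hM : ∀ s, t ≤ s → ‖G s‖ ≤ M) : ‖expResolvent κ G t‖ ≤ M / κ := by
  have hker : ∫ s in Set.Ioi (0 : ℝ), Real.exp (-κ * s) * M = M / κ := by
    rw [integral_mul_const, integral_exp_mul_Ioi (neg_lt_zero.2 hκ), mul_zero, Real.exp_zero,
      neg_div_neg_eq, one_div_mul_eq_div]
  rw [← hker]
  refine norm_integral_le_of_norm_le ((exp_neg_integrableOn_Ioi 0 hκ).mul_const M) ?_
  filter_upwards [ae_restrict_mem measurableSet_Ioi] with s hs
  exact norm_exp_smul_le (hM _ (le_add_of_nonneg_right (le_of_lt hs)))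

theorem continuous_expResolvent {κ M : ℝ} (hκ : 0 < κ) {G : ℝ → E} (hG : Continuous G)
    (hM : ∀ s, ‖G s‖ ≤ M) : Continuous (expResolvent κ G) :=
  continuous_of_dominated (fun _ => by fun_prop)
    (fun _ => Eventually.of_forall fun _ => norm_exp_smul_le (hM _))
    ((exp_neg_integrableOn_Ioi 0 hκ).mul_const M) (Eventually.of_forall fun _ => by fun_prop)

theorem expResolvent_sub {κ M M' : ℝ} (hκ : 0 < κ) {G H : ℝ → E} (hG : Continuous G)
    (hH : Continuous H) (hM : ∀ s, ‖G s‖ ≤ M) (hM' : ∀ s, ‖H s‖ ≤ M') (t : ℝ) :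
    expResolvent κ (fun s => G s - H s) t = expResolvent κ G t - expResolvent κ H t := by
  simp only [expResolvent, smul_sub]
  exact integral_sub (integrableOn_exp_smul hκ (hG.comp (continuous_const_add t)) fun _ => hM _)
    (integrableOn_exp_smul hκ (hH.comp (continuous_const_add t)) fun _ => hM' _)

theorem expResolvent_eq_exp_smul_integral (κ : ℝ) (G : ℝ → E) (t : ℝ) :
    expResolvent κ G t = Real.exp (κ * t) • ∫ s in Set.Ioi t, Real.exp (-κ * s) • G s := by
  rw [← integral_smul, expResolvent]
  have hshift := (measurePreserving_add_left volume t).setIntegral_preimage_emb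
    (measurableEmbedding_addLeft t) (fun s => Real.exp (κ * t) • Real.exp (-κ * s) • G s)
    (Set.Ioi t)
  rw [← hshift, Set.preimage_const_add_Ioi, sub_self]
  refine integral_congr_ae (Eventually.of_forall fun s => ?_)
  simp only [smul_smul, ← Real.exp_add]
  ring_nf

theorem hasDerivAt_expResolvent [CompleteSpace E] {κ M : ℝ} (hκ : 0 < κ) {G : ℝ → E}
    (hG : Continuous G) (hM : ∀ s, ‖G s‖ ≤ M) (t : ℝ) :
    HasDerivAt (expResolvent κ G) (κ • expResolvent κ G t - G t) t := by
  have hint := hasDerivAt_integral_Ioi (h := fun s => Real.exp (-κ * s) • G s)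
    (by fun_prop) (integrableOn_exp_smul hκ hG hM) (sub_one_lt t)
  have hexp : HasDerivAt (fun x => Real.exp (κ * x)) (κ * Real.exp (κ * t)) t := by
    simpa [mul_comm] using ((hasDerivAt_id t).const_mul κ).exp
  rw [funext (expResolvent_eq_exp_smul_integral κ G)]
  convert hexp.fun_smul hint using 1
  rw [smul_neg, smul_smul (Real.exp (κ * t)), ← Real.exp_add, mul_smul]
  simp [neg_mul, add_comm, sub_eq_add_neg]

end ExpResolvent

theorem norm_le_add_mul_norm {E : Type*} [NormedAddCommGroup E] {δ : ℝ} {φ : E → E}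
    (hlip : ∀ x y, ‖φ x - φ y‖ ≤ δ * ‖x - y‖)
    (x : E) : ‖φ x‖ ≤ ‖φ 0‖ + δ * ‖x‖ := by
  have h := hlip x 0
  rw [sub_zero] at h
  linarith [norm_le_norm_add_norm_sub' (φ x) (φ 0)]

section BoundedSolution

variable {E : Type*} [NormedAddCommGroup E] [NormedSpace ℝ E]

theorem exists_eq_neg_expResolvent [CompleteSpace E] {κ δ M : ℝ} (hδ : 0 ≤ δ) (hδκ : δ < κ)
    {Φ : ℝ → E → E} (hΦ : Continuous fun p : ℝ × E => Φ p.1 p.2)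
    (hlip : ∀ t x y, ‖Φ t x - Φ t y‖ ≤ δ * ‖x - y‖) (hzero : ∀ t, ‖Φ t 0‖ ≤ M) :
    ∃ V : BoundedContinuousFunction ℝ E, ∀ t, V t = -expResolvent κ (fun s => Φ s (V s)) t := by
  have hκ : 0 < κ := hδ.trans_lt hδκ
  have hcont (V : BoundedContinuousFunction ℝ E) : Continuous fun s => Φ s (V s) :=
    hΦ.comp (continuous_id.prodMk V.continuous)
  have hbound (V : BoundedContinuousFunction ℝ E) (s : ℝ) : ‖Φ s (V s)‖ ≤ M + δ * ‖V‖ :=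
    (norm_le_add_mul_norm (hlip s) _).trans
      (add_le_add (hzero s) (mul_le_mul_of_nonneg_left (V.norm_coe_le_norm s) hδ))
  let T (V : BoundedContinuousFunction ℝ E) : BoundedContinuousFunction ℝ E :=
    .ofNormedAddCommGroup (fun t => -expResolvent κ (fun s => Φ s (V s)) t)
      (continuous_expResolvent hκ (hcont V) (hbound V)).neg ((M + δ * ‖V‖) / κ)
      fun t => (norm_neg _).trans_le (norm_expResolvent_le hκ fun s _ => hbound V s)
  have hT : ContractingWith (δ / κ).toNNReal T := by
    refine ⟨by rwa [← Real.toNNReal_one, Real.toNNReal_lt_toNNReal_iff one_pos, div_lt_one hκ],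
      LipschitzWith.of_dist_le_mul fun V W => ?_⟩
    rw [Real.coe_toNNReal _ (by positivity), BoundedContinuousFunction.dist_le (by positivity)]
    intro t
    have hdiff : T V t - T W t = expResolvent κ (fun s => Φ s (W s) - Φ s (V s)) t :=
      (neg_sub_neg _ _).trans
        (expResolvent_sub hκ (hcont W) (hcont V) (hbound W) (hbound V) t).symm
    rw [dist_eq_norm, hdiff, div_mul_eq_mul_div]
    refine norm_expResolvent_le hκ fun s _ => (hlip s _ _).trans ?_
    rw [← dist_eq_norm, dist_comm]
    exact mul_le_mul_of_nonneg_left (V.dist_coe_le_dist s) hδ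
  exact ⟨hT.fixedPoint T, fun t => congrArg (· t) hT.fixedPoint_isFixedPt.symm⟩

theorem norm_le_of_eq_neg_expResolvent {κ δ M t : ℝ} (hδ : 0 ≤ δ) (hδκ : δ < κ)
    {Φ : ℝ → E → E} (hlip : ∀ t x y, ‖Φ t x - Φ t y‖ ≤ δ * ‖x - y‖)
    (hM : ∀ s, t ≤ s → ‖Φ s 0‖ ≤ M) {V : BoundedContinuousFunction ℝ E}
    (hV : ∀ t, V t = -expResolvent κ (fun s => Φ s (V s)) t) : ‖V t‖ ≤ M / (κ - δ) := by
  have hκ : 0 < κ := hδ.trans_lt hδκ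
  set A := sSup ((fun s => ‖V s‖) '' Set.Ici t)
  have hle (s : ℝ) (hs : t ≤ s) : ‖V s‖ ≤ A :=
    le_csSup ⟨‖V‖, by rintro _ ⟨s, _, rfl⟩; exact V.norm_coe_le_norm s⟩ ⟨s, hs, rfl⟩
  have hA : A ≤ (M + δ * A) / κ := by
    refine csSup_le (Set.nonempty_Ici.image _) ?_
    rintro _ ⟨s, hs, rfl⟩
    simp only [hV s, norm_neg]
    exact norm_expResolvent_le hκ fun x hx => (norm_le_add_mul_norm (hlip x) _).trans
      (add_le_add (hM x (le_trans hs hx)) (mul_le_mul_of_nonneg_left (hle x (le_trans hs hx)) hδ))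
  rw [le_div_iff₀ hκ] at hA
  refine (hle t le_rfl).trans ?_
  rw [le_div_iff₀ (sub_pos.2 hδκ)]
  linarith

theorem exists_bounded_solution [CompleteSpace E] {κ δ t₀ : ℝ} (hδ : 0 ≤ δ) (hδκ : δ < κ)
    {Φ : ℝ → E → E} {e : ℝ → ℝ}
    (hΦ : ContinuousOn (fun p : ℝ × E => Φ p.1 p.2) (Set.Ici t₀ ×ˢ Set.univ))
    (hlip : ∀ t, t₀ ≤ t → ∀ x y, ‖Φ t x - Φ t y‖ ≤ δ * ‖x - y‖)
    (hzero : ∀ t, t₀ ≤ t → ‖Φ t 0‖ ≤ e t) (he : AntitoneOn e (Set.Ici t₀)) :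
    ∃ V : ℝ → E, (∀ t, t₀ ≤ t → HasDerivAt V (κ • V t + Φ t (V t)) t) ∧
      ∀ t, t₀ ≤ t → ‖V t‖ ≤ e t / (κ - δ) := by
  have hκ : 0 < κ := hδ.trans_lt hδκ
  let Φ' (t : ℝ) (x : E) : E := Φ (max t t₀) x
  have hΦ' : Continuous fun p : ℝ × E => Φ' p.1 p.2 :=
    hΦ.comp_continuous (f := fun p : ℝ × E => (max p.1 t₀, p.2)) (by fun_prop)
      fun p => ⟨le_max_right p.1 t₀, Set.mem_univ _⟩
  have hlip' (t : ℝ) (x y : E) : ‖Φ' t x - Φ' t y‖ ≤ δ * ‖x - y‖ := hlip _ (le_max_right _ _) x y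
  have hzero' (t s : ℝ) (ht : t₀ ≤ t) (hs : t ≤ max s t₀) : ‖Φ' s 0‖ ≤ e t :=
    (hzero _ (le_max_right _ _)).trans (he ht (le_max_right s t₀) hs)
  have hbound (t : ℝ) : ‖Φ' t 0‖ ≤ e t₀ := hzero' t₀ t le_rfl (le_max_right _ _)
  obtain ⟨V, hV⟩ := exists_eq_neg_expResolvent hδ hδκ hΦ' hlip' hbound
  refine ⟨V, fun t ht => ?_, fun t ht => norm_le_of_eq_neg_expResolvent hδ hδκ hlip'
    (fun s hs => hzero' t s ht (le_max_of_le_left hs)) hV⟩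
  have hVc : Continuous fun s => Φ' s (V s) := hΦ'.comp (continuous_id.prodMk V.continuous)
  have hderiv := (hasDerivAt_expResolvent hκ hVc
    (fun s => (norm_le_add_mul_norm (hlip' s) _).trans
      (add_le_add (hbound s) (mul_le_mul_of_nonneg_left (V.norm_coe_le_norm s) hδ))) t).neg
  have hmax : Φ' t (V t) = Φ t (V t) := by simp only [Φ', max_eq_left ht]
  rw [neg_sub, hmax, sub_eq_add_neg, add_comm, ← smul_neg, ← hV] at hderiv
  exact hderiv.congr_of_eventuallyEq (Eventually.of_forall hV)

theorem exists_bounded_euler_solution [CompleteSpace E] {κ δ r₀ : ℝ} (hδ : 0 ≤ δ) (hδκ : δ < κ)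
    (hr₀ : 0 < r₀) {Φ : ℝ → E → E} {e : ℝ → ℝ}
    (hΦ : ContinuousOn (fun p : ℝ × E => Φ p.1 p.2) (Set.Ici r₀ ×ˢ Set.univ))
    (hlip : ∀ r, r₀ ≤ r → ∀ x y, ‖Φ r x - Φ r y‖ ≤ δ * ‖x - y‖)
    (hzero : ∀ r, r₀ ≤ r → ‖Φ r 0‖ ≤ e r) (he : AntitoneOn e (Set.Ici r₀)) :
    ∃ V : ℝ → E, (∀ r, r₀ ≤ r → HasDerivAt V (r⁻¹ • (κ • V r + Φ r (V r))) r) ∧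
      ∀ r, r₀ ≤ r → ‖V r‖ ≤ e r / (κ - δ) := by
  have hexp {t : ℝ} (ht : Real.log r₀ ≤ t) : r₀ ≤ Real.exp t := (Real.log_le_iff_le_exp hr₀).1 ht
  obtain ⟨V, hV, hVle⟩ := exists_bounded_solution (t₀ := Real.log r₀) hδ hδκ
    (Φ := fun t => Φ (Real.exp t)) (e := fun t => e (Real.exp t))
    (hΦ.comp (f := fun p : ℝ × E => (Real.exp p.1, p.2)) (by fun_prop)
      fun p hp => ⟨hexp hp.1, Set.mem_univ _⟩)
    (fun t ht => hlip _ (hexp ht)) (fun t ht => hzero _ (hexp ht))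
    fun t ht t' ht' htt' => he (hexp ht) (hexp ht') (Real.exp_le_exp.2 htt')
  refine ⟨V ∘ Real.log, fun r hr => ?_, fun r hr => ?_⟩
  all_goals
    have hr' : Real.exp (Real.log r) = r := Real.exp_log (hr₀.trans_le hr)
    have hlog : Real.log r₀ ≤ Real.log r := Real.log_le_log hr₀ hr
  · have hcomp := (hV _ hlog).scomp r (Real.hasDerivAt_log (hr₀.trans_le hr).ne')
    rwa [hr'] at hcomp
  · simpa only [hr', Function.comp_apply] using hVle _ hlog

theorem exists_bounded_rotating_solution {κ δ r₀ : ℝ} (hδ : 0 ≤ δ) (hδκ : δ < κ) (hr₀ : 0 < r₀)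
    {θ ω : ℝ → ℝ} (hθ : ∀ r, r₀ ≤ r → HasDerivAt θ (ω r) r) {Φ : ℝ → ℂ → ℂ} {e : ℝ → ℝ}
    (hΦ : ContinuousOn (fun p : ℝ × ℂ => Φ p.1 p.2) (Set.Ici r₀ ×ˢ Set.univ))
    (hlip : ∀ r, r₀ ≤ r → ∀ z w, ‖Φ r z - Φ r w‖ ≤ δ * ‖z - w‖)
    (hzero : ∀ r, r₀ ≤ r → ‖Φ r 0‖ ≤ e r) (he : AntitoneOn e (Set.Ici r₀)) :
    ∃ ζ : ℝ → ℂ, (∀ r, r₀ ≤ r →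
        HasDerivAt ζ ((κ * ζ r + Φ r (ζ r)) / r - Complex.I * ω r * ζ r) r) ∧
      ∀ r, r₀ ≤ r → ‖ζ r‖ ≤ e r / (κ - δ) := by
  let q (x : ℝ) : ℂ := Complex.exp (x * Complex.I)
  have hq (x : ℝ) : ‖q x‖ = 1 := Complex.norm_exp_ofReal_mul_I x
  have hqc : Continuous q := Complex.continuous_exp.comp (Complex.continuous_ofReal.mul_const _)
  have hqq (x : ℝ) : q (-x) * q x = 1 := by
    rw [← Complex.exp_add]
    simp
  have hθc : ContinuousOn (fun p : ℝ × ℂ => θ p.1) (Set.Ici r₀ ×ˢ Set.univ) :=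
    ContinuousOn.comp (fun r hr => (hθ r hr).continuousAt.continuousWithinAt) continuousOn_fst
      fun p hp => hp.1
  obtain ⟨V, hV, hVle⟩ := exists_bounded_euler_solution hδ hδκ hr₀
    (Φ := fun r v => q (θ r) * Φ r (q (-θ r) * v)) (e := e)
    ((hqc.comp_continuousOn hθc).mul (hΦ.comp (f := fun p : ℝ × ℂ => (p.1, q (-θ p.1) * p.2))
      (continuousOn_fst.prodMk ((hqc.comp_continuousOn hθc.neg).mul continuousOn_snd))
      fun p hp => ⟨hp.1, Set.mem_univ _⟩))
    (fun r hr x y => by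
      rw [← mul_sub, norm_mul, hq, one_mul]
      refine (hlip r hr _ _).trans_eq ?_
      rw [← mul_sub, norm_mul, hq, one_mul])
    (fun r hr => by simpa only [norm_mul, hq, one_mul, mul_zero] using hzero r hr) he
  refine ⟨fun r => q (-θ r) * V r, fun r hr => ?_, fun r hr => ?_⟩
  · have hqderiv : HasDerivAt (fun r => q (-θ r)) (q (-θ r) * (((-ω r : ℝ) : ℂ) * Complex.I)) r :=
      ((hθ r hr).neg.ofReal_comp.mul_const Complex.I).cexp
    refine (hqderiv.mul (hV r hr)).congr_deriv ?_
    simp only [Complex.real_smul]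
    push_cast
    linear_combination (Φ r (q (-θ r) * V r) / r) * hqq (θ r)
  · rw [norm_mul, hq, one_mul]
    exact hVle r hr

end BoundedSolution

/-! ### The tail integral and the inverse of its logarithm -/

section InverseAtTop

variable {L L' : ℝ → ℝ} {s₀ c y : ℝ}

theorem strictMonoOn_of_hasDerivAt_pos (hL : ∀ s, s₀ < s → HasDerivAt L (L' s) s)
    (hL' : ∀ s, s₀ < s → 0 < L' s) : StrictMonoOn L (Set.Ioi s₀) :=
  strictMonoOn_of_deriv_pos (convex_Ioi _)
    (fun s hs => (hL s hs).continuousAt.continuousWithinAt) fun s hs => by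
      rw [interior_Ioi] at hs
      exact (hL s hs).deriv.symm ▸ hL' s hs

theorem mem_image_Ioi_of_tendsto_atTop (hL : ContinuousOn L (Set.Ioi s₀))
    (htop : Tendsto L atTop atTop) (hc : s₀ < c) (hy : L c ≤ y) : y ∈ L '' Set.Ioi s₀ := by
  obtain ⟨b, hb, hcb⟩ := ((htop.eventually_ge_atTop y).and (eventually_ge_atTop c)).exists
  obtain ⟨s, hs, hsy⟩ := intermediate_value_Icc hcb
    (hL.mono fun x hx => hc.trans_le hx.1) ⟨hy, hb⟩
  exact ⟨s, hc.trans_le hs.1, hsy⟩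

theorem hasDerivAt_invFunOn_Ioi (hL : ∀ s, s₀ < s → HasDerivAt L (L' s) s)
    (hL' : ∀ s, s₀ < s → 0 < L' s) (htop : Tendsto L atTop atTop) (hy : y ∈ L '' Set.Ioi s₀) :
    HasDerivAt (Function.invFunOn L (Set.Ioi s₀))
      (L' (Function.invFunOn L (Set.Ioi s₀) y))⁻¹ y := by
  set S := Function.invFunOn L (Set.Ioi s₀)
  have hmono := strictMonoOn_of_hasDerivAt_pos hL hL'
  obtain ⟨c, hc, hcy⟩ : ∃ c, s₀ < c ∧ L c < y := by
    obtain ⟨s, hs, rfl⟩ := hy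
    obtain ⟨c, hc, hcs⟩ := exists_between (Set.mem_Ioi.1 hs)
    exact ⟨c, hc, hmono hc hs hcs⟩
  have hex (x : ℝ) (hx : L c < x) : x ∈ L '' Set.Ioi s₀ :=
    mem_image_Ioi_of_tendsto_atTop (fun s hs => (hL s hs).continuousAt.continuousWithinAt)
      htop hc hx.le
  have hmem (x : ℝ) (hx : L c < x) : S x ∈ Set.Ioi s₀ := Function.invFunOn_mem (hex x hx)
  have hright (x : ℝ) (hx : L c < x) : L (S x) = x := Function.invFunOn_eq (hex x hx)
  have hSmono : StrictMonoOn S (Set.Ioi (L c)) := fun x hx x' hx' hxx' =>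
    (hmono.lt_iff_lt (hmem x hx) (hmem x' hx')).1 (by rwa [hright x hx, hright x' hx'])
  have hcS : c < S y := (hmono.lt_iff_lt hc (hmem y hcy)).1 (by rwa [hright y hcy])
  have hcont : ContinuousAt S y := by
    refine hSmono.continuousAt_of_image_mem_nhds (Ioi_mem_nhds hcy)
      (mem_of_superset (Ioi_mem_nhds hcS) fun s hs => ?_)
    exact ⟨L s, hmono hc (hc.trans hs) hs, hmono.injOn.leftInvOn_invFunOn (hc.trans hs)⟩
  exact (hL _ (hmem y hcy)).of_local_left_inverse hcont (hL' _ (hmem y hcy)).ne'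
    ((lt_mem_nhds hcy).mono hright)

theorem tendsto_invFunOn_Ioi_atTop (hL : ∀ s, s₀ < s → HasDerivAt L (L' s) s)
    (hL' : ∀ s, s₀ < s → 0 < L' s) (htop : Tendsto L atTop atTop) :
    Tendsto (Function.invFunOn L (Set.Ioi s₀)) atTop atTop := by
  have hmono := strictMonoOn_of_hasDerivAt_pos hL hL'
  refine tendsto_atTop.2 fun M => ?_
  have hM : s₀ < max M (s₀ + 1) := lt_max_of_lt_right (lt_add_one s₀)
  filter_upwards [eventually_gt_atTop (L (max M (s₀ + 1)))] with y hy
  have hy' := mem_image_Ioi_of_tendsto_atTop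
    (fun s hs => (hL s hs).continuousAt.continuousWithinAt) htop hM hy.le
  refine (le_max_left M (s₀ + 1)).trans ((hmono.le_iff_le hM (Function.invFunOn_mem hy')).1 ?_)
  rw [Function.invFunOn_eq hy']
  exact hy.le

end InverseAtTop

section TailIntegral

variable {f : ℝ → ℝ} {s₀ c s y : ℝ}

theorem tendsto_Fint_atTop (hint : IntegrableOn (fun τ => 1 / f τ) (Set.Ioi c)) :
    Tendsto (Fint f) atTop (nhds 0) := by
  have htail := (intervalIntegral_tendsto_integral_Ioi c hint tendsto_id).const_sub (Fint f c)
  rw [Fint, sub_self] at htail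
  refine htail.congr' ?_
  filter_upwards [eventually_ge_atTop c] with x hx
  rw [id, ← intervalIntegral.integral_Ioi_sub_Ioi' hint
    (hint.mono_set (Set.Ioi_subset_Ioi hx)), sub_sub_cancel, Fint]

theorem Fint_pos (hpos : ∀ τ, s < τ → 0 < f τ)
    (hint : IntegrableOn (fun τ => 1 / f τ) (Set.Ioi s)) : 0 < Fint f s := by
  refine (setIntegral_pos_iff_support_of_nonneg_ae ?_ hint).2 ?_
  · filter_upwards [ae_restrict_mem measurableSet_Ioi] with τ hτ
    exact (one_div_pos.2 (hpos τ hτ)).le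
  · have hsupp : Set.Ioi s ⊆ Function.support fun τ => 1 / f τ :=
      fun τ hτ => (one_div_pos.2 (hpos τ hτ)).ne'
    rw [Set.inter_eq_right.2 hsupp, Real.volume_Ioi]
    exact ENNReal.zero_lt_top

theorem hasDerivAt_Fint (hf : ContinuousOn f (Set.Ioi s₀)) (hpos : ∀ s, s₀ < s → 0 < f s)
    (hint : ∀ s, s₀ < s → IntegrableOn (fun τ => 1 / f τ) (Set.Ioi s)) (hs : s₀ < s) :
    HasDerivAt (Fint f) (-(1 / f s)) s := by
  obtain ⟨c, hc, hcs⟩ := exists_between hs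
  refine hasDerivAt_integral_Ioi ?_ (hint c hc) hcs
  exact continuousOn_const.div (hf.mono (Set.Ioi_subset_Ioi hc.le))
    fun x hx => (hpos x (hc.trans hx)).ne'

theorem hasDerivAt_deriv_mul_of_hasDerivAt {F : ℝ → ℝ} (hF : HasDerivAt F (-(1 / f s)) s)
    (hf' : DifferentiableAt ℝ (deriv f) s) (hfs : f s ≠ 0) (hf's : deriv f s ≠ 0)
    (hFs : F s ≠ 0) (hlog : Real.log (F s) ≠ 0) :
    HasDerivAt (fun s => deriv f s * F s) (invB2 f F s / (f s * F s * Real.log (F s) ^ 2)) s := by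
  refine (hf'.hasDerivAt.mul hF).congr_deriv ?_
  rw [invB2]
  field_simp
  ring

/-- The function `L(s) = -log F(s)`. -/
noncomputable def logTail (f : ℝ → ℝ) (s : ℝ) : ℝ := -Real.log (Fint f s)

/-- The inverse `S` of `L = logTail f` on `(s₀, ∞)`, so that `F(S(y)) = e^{-y}`. It is only
meaningful at points of `L((s₀, ∞))`. -/
noncomputable def tailInv (f : ℝ → ℝ) (s₀ : ℝ) : ℝ → ℝ :=
  Function.invFunOn (logTail f) (Set.Ioi s₀)

/-- The deviation `m(y) = 1 - f'(S(y)) F(S(y))` from the limit in (f2), as a function of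
`y = -log F`. -/
noncomputable def tailDefect (f : ℝ → ℝ) (s₀ y : ℝ) : ℝ :=
  1 - deriv f (tailInv f s₀ y) * Fint f (tailInv f s₀ y)

/-- The product `A(y) = f(S(y)) F(S(y))`, as a function of `y = -log F`. -/
noncomputable def tailAmplitude (f : ℝ → ℝ) (s₀ y : ℝ) : ℝ :=
  f (tailInv f s₀ y) * Fint f (tailInv f s₀ y)

theorem lt_tailInv (hy : y ∈ logTail f '' Set.Ioi s₀) : s₀ < tailInv f s₀ y :=
  Function.invFunOn_mem hy

theorem logTail_tailInv (hy : y ∈ logTail f '' Set.Ioi s₀) : logTail f (tailInv f s₀ y) = y :=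
  Function.invFunOn_eq hy

end TailIntegral

/-- Hypothesis (f1) on the ray `(s₀, ∞)`; the condition `F(s) < ∞` is expressed as
integrability of `1 / f`. -/
structure IsTailRegular (f : ℝ → ℝ) (s₀ : ℝ) : Prop where
  contDiffOn : ContDiffOn ℝ 2 f (Set.Ioi s₀)
  pos : ∀ s, s₀ < s → 0 < f s
  deriv_pos : ∀ s, s₀ < s → 0 < deriv f s
  integrableOn : ∀ s, s₀ < s → IntegrableOn (fun τ => 1 / f τ) (Set.Ioi s)

namespace IsTailRegular

variable {f : ℝ → ℝ} {s₀ s y : ℝ} (hf : IsTailRegular f s₀)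

include hf

theorem contDiffOn_deriv : ContDiffOn ℝ 1 (deriv f) (Set.Ioi s₀) :=
  hf.contDiffOn.deriv_of_isOpen isOpen_Ioi (by norm_num)

theorem hasDerivAt (hs : s₀ < s) : HasDerivAt f (deriv f s) s :=
  ((hf.contDiffOn.differentiableOn (by norm_num)).differentiableAt (Ioi_mem_nhds hs)).hasDerivAt

theorem differentiableAt_deriv (hs : s₀ < s) : DifferentiableAt ℝ (deriv f) s :=
  (hf.contDiffOn_deriv.differentiableOn (by norm_num)).differentiableAt (Ioi_mem_nhds hs)

theorem Fint_pos (hs : s₀ < s) : 0 < Fint f s :=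
  _root_.Fint_pos (fun τ hτ => hf.pos τ (hs.trans hτ)) (hf.integrableOn s hs)

theorem hasDerivAt_Fint (hs : s₀ < s) : HasDerivAt (Fint f) (-(1 / f s)) s :=
  _root_.hasDerivAt_Fint hf.contDiffOn.continuousOn hf.pos hf.integrableOn hs

theorem exp_neg_logTail (hs : s₀ < s) : Real.exp (-logTail f s) = Fint f s := by
  rw [logTail, neg_neg, Real.exp_log (hf.Fint_pos hs)]

theorem hasDerivAt_logTail (hs : s₀ < s) : HasDerivAt (logTail f) (1 / (f s * Fint f s)) s := by
  refine ((hf.hasDerivAt_Fint hs).log (hf.Fint_pos hs).ne').neg.congr_deriv ?_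
  rw [neg_div, neg_neg, div_div]

theorem logTail_deriv_pos (s : ℝ) (hs : s₀ < s) : 0 < 1 / (f s * Fint f s) :=
  one_div_pos.2 (mul_pos (hf.pos s hs) (hf.Fint_pos hs))

theorem tendsto_logTail : Tendsto (logTail f) atTop atTop := by
  refine tendsto_neg_atBot_atTop.comp (Real.tendsto_log_nhdsGT_zero.comp
    (tendsto_nhdsWithin_iff.2 ⟨tendsto_Fint_atTop (hf.integrableOn _ (lt_add_one s₀)), ?_⟩))
  filter_upwards [eventually_gt_atTop s₀] with s hs using hf.Fint_pos hs

theorem eventually_mem_image_logTail : ∀ᶠ y in atTop, y ∈ logTail f '' Set.Ioi s₀ := by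
  filter_upwards [eventually_ge_atTop (logTail f (s₀ + 1))] with y hy
  exact mem_image_Ioi_of_tendsto_atTop
    (fun s hs => (hf.hasDerivAt_logTail hs).continuousAt.continuousWithinAt)
    hf.tendsto_logTail (lt_add_one s₀) hy

theorem tailInv_logTail (hs : s₀ < s) : tailInv f s₀ (logTail f s) = s :=
  (strictMonoOn_of_hasDerivAt_pos (fun _ => hf.hasDerivAt_logTail)
    hf.logTail_deriv_pos).injOn.leftInvOn_invFunOn hs

theorem tailInv_eq_of_Fint_eq (hs : s₀ < s) (hy : Fint f s = Real.exp (-y)) :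
    tailInv f s₀ y = s := by
  rw [← hf.tailInv_logTail hs, logTail, hy, Real.log_exp, neg_neg]

theorem Fint_tailInv (hy : y ∈ logTail f '' Set.Ioi s₀) :
    Fint f (tailInv f s₀ y) = Real.exp (-y) := by
  rw [← hf.exp_neg_logTail (lt_tailInv hy), logTail_tailInv hy]

theorem log_Fint_tailInv (hy : y ∈ logTail f '' Set.Ioi s₀) :
    Real.log (Fint f (tailInv f s₀ y)) = -y := by
  rw [hf.Fint_tailInv hy, Real.log_exp]

theorem hasDerivAt_tailInv (hy : y ∈ logTail f '' Set.Ioi s₀) :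
    HasDerivAt (tailInv f s₀) (tailAmplitude f s₀ y) y := by
  refine (hasDerivAt_invFunOn_Ioi (fun _ => hf.hasDerivAt_logTail) hf.logTail_deriv_pos
    hf.tendsto_logTail hy).congr_deriv ?_
  rw [one_div, inv_inv, ← tailInv, tailAmplitude]

theorem tendsto_tailInv : Tendsto (tailInv f s₀) atTop atTop :=
  tendsto_invFunOn_Ioi_atTop (fun _ => hf.hasDerivAt_logTail) hf.logTail_deriv_pos
    hf.tendsto_logTail

theorem tailAmplitude_pos (hy : y ∈ logTail f '' Set.Ioi s₀) : 0 < tailAmplitude f s₀ y :=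
  mul_pos (hf.pos _ (lt_tailInv hy)) (hf.Fint_pos (lt_tailInv hy))

theorem hasDerivAt_tailAmplitude (hy : y ∈ logTail f '' Set.Ioi s₀) :
    HasDerivAt (tailAmplitude f s₀) (-(tailAmplitude f s₀ y * tailDefect f s₀ y)) y := by
  have hs := lt_tailInv hy
  refine (((hf.hasDerivAt hs).mul (hf.hasDerivAt_Fint hs)).comp y
    (hf.hasDerivAt_tailInv hy)).congr_deriv ?_
  have := (hf.pos _ hs).ne'
  rw [tailDefect]
  field_simp
  ring

theorem hasDerivAt_tailDefect (hy : y ∈ logTail f '' Set.Ioi s₀) (hy0 : y ≠ 0) :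
    HasDerivAt (tailDefect f s₀) (-(invB2 f (Fint f) (tailInv f s₀ y) / y ^ 2)) y := by
  have hs := lt_tailInv hy
  have hlog := hf.log_Fint_tailInv hy
  refine (((hasDerivAt_deriv_mul_of_hasDerivAt (hf.hasDerivAt_Fint hs)
    (hf.differentiableAt_deriv hs) (hf.pos _ hs).ne' (hf.deriv_pos _ hs).ne' (hf.Fint_pos hs).ne'
    (hlog ▸ neg_ne_zero.2 hy0)).comp y (hf.hasDerivAt_tailInv hy)).const_sub 1).congr_deriv ?_
  have := (hf.pos _ hs).ne'
  have := (hf.Fint_pos hs).ne'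
  rw [hlog, tailAmplitude]
  field_simp

theorem mul_tailDefect (hy : y ∈ logTail f '' Set.Ioi s₀) :
    y * tailDefect f s₀ y = invB1 f (Fint f) (tailInv f s₀ y) := by
  rw [invB1, hf.log_Fint_tailInv hy, neg_neg, tailDefect]

theorem continuousAt_invB2_tailInv (hy : y ∈ logTail f '' Set.Ioi s₀) :
    ContinuousAt (fun y => invB2 f (Fint f) (tailInv f s₀ y)) y := by
  have hs := lt_tailInv hy
  have hf0 := (hf.hasDerivAt hs).continuousAt
  have hf1 := (hf.differentiableAt_deriv hs).continuousAt
  have hf2 : ContinuousAt (deriv (deriv f)) (tailInv f s₀ y) :=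
    (hf.contDiffOn_deriv.continuousOn_deriv_of_isOpen isOpen_Ioi (by norm_num)).continuousAt
      (Ioi_mem_nhds hs)
  have hF := (hf.hasDerivAt_Fint hs).continuousAt
  exact ContinuousAt.comp (g := invB2 f (Fint f)) (((hf1.mul hF).mul
    ((hF.log (hf.Fint_pos hs).ne').pow 2)).mul
      ((((hf0.mul hf2).mul hF).div hf1 (hf.deriv_pos _ hs).ne').sub continuousAt_const))
    (hf.hasDerivAt_tailInv hy).continuousAt

theorem tendsto_invB2_tailInv {ℓ : ℝ} (hB₂ : Tendsto (invB2 f (Fint f)) atTop (nhds ℓ)) :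
    Tendsto (fun y => invB2 f (Fint f) (tailInv f s₀ y)) atTop (nhds ℓ) :=
  hB₂.comp hf.tendsto_tailInv

theorem tendsto_mul_tailDefect {ℓ : ℝ}
    (hlim : Tendsto (fun s => deriv f s * Fint f s) atTop (nhds 1))
    (hB₂ : Tendsto (invB2 f (Fint f)) atTop (nhds ℓ)) :
    Tendsto (fun y => y * tailDefect f s₀ y) atTop (nhds ℓ) := by
  have hzero : Tendsto (tailDefect f s₀) atTop (nhds 0) := by
    have h := (hlim.comp hf.tendsto_tailInv).const_sub 1
    rwa [sub_self] at h
  have hne : ∀ᶠ y : ℝ in atTop, y ≠ 0 := eventually_ne_atTop 0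
  have hratio := HasDerivAt.lhopital_zero_atTop
    (hf.eventually_mem_image_logTail.mp (hne.mono fun y hy0 hy => hf.hasDerivAt_tailDefect hy hy0))
    (hne.mono fun y hy0 => hasDerivAt_inv hy0)
    (hne.mono fun y hy0 => neg_ne_zero.2 (inv_ne_zero (pow_ne_zero 2 hy0))) hzero
    tendsto_inv_atTop_zero ((hf.tendsto_invB2_tailInv hB₂).congr'
      (hne.mono fun y hy0 => by field_simp))
  exact hratio.congr fun y => by rw [div_inv_eq_mul, mul_comm]

end IsTailRegular

/-! ### The model pair in Emden–Fowler variables -/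

section ModelPair

variable {B s r t : ℝ}

/-- The phase `P` with `G = (B/4)(P + 1) e^{-P}`, in terms of which the cases `B = 1` and `B > 1`
of the model pair coincide: both have `P'' = P'² / (B P)` and `g = 4 e^P / (B P P')`. -/
noncomputable def modelPhase (B s : ℝ) : ℝ :=
  if B = 1 then Real.exp s else s ^ (B / (B - 1))

/-- The derivative of `modelPhase B`, at positive arguments if `B ≠ 1`. -/
noncomputable def modelPhaseDeriv (B s : ℝ) : ℝ :=
  if B = 1 then Real.exp s else B / (B - 1) * s ^ (B / (B - 1) - 1)

/-- The function `d(r) = 1 - g'(ψ(r)) G(ψ(r))` of the Emden–Fowler variable `r`. -/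
noncomputable def modelDefect (B r : ℝ) : ℝ := (1 + r / B) / (r - 1) ^ 2

/-- The function `d'(r)`, the derivative of `modelDefect B`. -/
noncomputable def modelDefectDeriv (B r : ℝ) : ℝ :=
  1 / (B * (r - 1) ^ 2) - 2 * (1 + r / B) / (r - 1) ^ 3

/-- The level `Y(r) = -log G(ψ(r))` of the model pair in the Emden–Fowler variable `r`. -/
noncomputable def modelLevel (B r : ℝ) : ℝ := r - 1 - Real.log (B * r / 4)

theorem modelPhase_pos (hs : B ≠ 1 → 0 < s) : 0 < modelPhase B s := by
  rw [modelPhase]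
  split_ifs with h
  · exact Real.exp_pos s
  · exact Real.rpow_pos_of_pos (hs h) _

theorem modelPhaseDeriv_pos (hB : 1 ≤ B) (hs : B ≠ 1 → 0 < s) : 0 < modelPhaseDeriv B s := by
  rw [modelPhaseDeriv]
  split_ifs with h
  · exact Real.exp_pos s
  · exact mul_pos (div_pos (zero_lt_one.trans_le hB)
      (sub_pos.2 (lt_of_le_of_ne hB (Ne.symm h)))) (Real.rpow_pos_of_pos (hs h) _)

theorem hasDerivAt_modelPhase (hs : B ≠ 1 → 0 < s) :
    HasDerivAt (modelPhase B) (modelPhaseDeriv B s) s := by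
  unfold modelPhase modelPhaseDeriv
  by_cases h : B = 1
  · simpa only [h, if_true] using Real.hasDerivAt_exp s
  · simpa only [h, if_false] using Real.hasDerivAt_rpow_const (Or.inl (hs h).ne')

theorem hasDerivAt_modelPhaseDeriv (hB : 1 ≤ B) (hs : B ≠ 1 → 0 < s) :
    HasDerivAt (modelPhaseDeriv B) (modelPhaseDeriv B s ^ 2 / (B * modelPhase B s)) s := by
  unfold modelPhase modelPhaseDeriv
  by_cases h : B = 1
  · simp only [h, if_true]
    refine (Real.hasDerivAt_exp s).congr_deriv ?_
    field_simp
  · simp only [h, if_false]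
    have hs := hs h
    have hB1 : B - 1 ≠ 0 := sub_ne_zero.2 h
    have hB0 : B ≠ 0 := by linarith
    refine ((Real.hasDerivAt_rpow_const (Or.inl hs.ne')).const_mul (B / (B - 1))).congr_deriv ?_
    have hpow := (Real.rpow_pos_of_pos hs (B / (B - 1))).ne'
    rw [Real.rpow_sub hs _ 1, Real.rpow_sub hs _ 1, Real.rpow_one]
    field_simp
    ring

theorem modelg_eq (hB : 1 ≤ B) (hs : B ≠ 1 → 0 < s) :
    modelg B s = 4 * Real.exp (modelPhase B s) / (B * modelPhase B s * modelPhaseDeriv B s) := by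
  by_cases h : B = 1
  · simp only [modelg, modelPhase, modelPhaseDeriv, h, if_true]
    rw [Real.exp_sub, two_mul, Real.exp_add]
    field_simp
  · simp only [modelg, modelPhase, modelPhaseDeriv, h, if_false]
    have hs := hs h
    have hB1 : B - 1 ≠ 0 := sub_ne_zero.2 h
    have hB0 : B ≠ 0 := by linarith
    have hpow := (Real.rpow_pos_of_pos hs (B / (B - 1))).ne'
    rw [Real.rpow_sub hs 1, Real.rpow_sub hs _ 1, Real.rpow_one, two_mul, Real.rpow_add hs]
    field_simp

theorem modelG_eq : modelG B s = B / 4 * (modelPhase B s + 1) * Real.exp (-modelPhase B s) := by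
  by_cases h : B = 1
  · simp only [modelG, modelPhase, h, if_true]
  · simp only [modelG, modelPhase, h, if_false]

theorem modelg_pos (hB : 1 ≤ B) (hs : B ≠ 1 → 0 < s) : 0 < modelg B s := by
  have hP := modelPhase_pos hs
  have hP' := modelPhaseDeriv_pos hB hs
  rw [modelg_eq hB hs]
  positivity

theorem modelG_pos (hB : 1 ≤ B) (hs : B ≠ 1 → 0 < s) : 0 < modelG B s := by
  have hP := modelPhase_pos hs
  rw [modelG_eq]
  positivity

theorem eventually_modelDomain (hs : B ≠ 1 → 0 < s) : ∀ᶠ x in nhds s, B ≠ 1 → 0 < x := by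
  by_cases h : B = 1
  · exact Eventually.of_forall fun x hx => absurd h hx
  · exact (lt_mem_nhds (hs h)).mono fun x hx _ => hx

theorem hasDerivAt_modelG (hB : 1 ≤ B) (hs : B ≠ 1 → 0 < s) :
    HasDerivAt (modelG B) (-(1 / modelg B s)) s := by
  have hP := hasDerivAt_modelPhase hs
  rw [funext fun x => modelG_eq (B := B) (s := x), modelg_eq hB hs]
  refine (((hP.add_const 1).const_mul (B / 4)).fun_mul hP.fun_neg.exp).congr_deriv ?_
  have := (modelPhase_pos hs).ne'
  have := (modelPhaseDeriv_pos hB hs).ne'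
  rw [Real.exp_neg]
  field_simp
  ring

theorem hasDerivAt_modelg (hB : 1 ≤ B) (hs : B ≠ 1 → 0 < s) :
    HasDerivAt (modelg B) (modelg B s * modelPhaseDeriv B s *
      (1 - (1 + 1 / B) / modelPhase B s)) s := by
  have hP := hasDerivAt_modelPhase hs
  have hP0 := (modelPhase_pos hs).ne'
  have hP0' := (modelPhaseDeriv_pos hB hs).ne'
  have hB0 : B ≠ 0 := by linarith
  have hderiv := (hP.exp.const_mul 4).fun_div ((hP.const_mul B).fun_mul
    (hasDerivAt_modelPhaseDeriv hB hs)) (mul_ne_zero (mul_ne_zero hB0 hP0) hP0')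
  refine (hderiv.congr_of_eventuallyEq
    ((eventually_modelDomain hs).mono fun x hx => modelg_eq hB hx)).congr_deriv ?_
  rw [modelg_eq hB hs]
  field_simp

theorem modelg_mul_modelG_mul (hB : 1 ≤ B) (hs : B ≠ 1 → 0 < s) :
    modelg B s * modelG B s * modelPhaseDeriv B s = (modelPhase B s + 1) / modelPhase B s := by
  have hP0 := (modelPhase_pos hs).ne'
  have hP0' := (modelPhaseDeriv_pos hB hs).ne'
  rw [modelg_eq hB hs, modelG_eq, Real.exp_neg]
  field_simp

theorem deriv_modelg_mul_modelG (hB : 1 ≤ B) (hs : B ≠ 1 → 0 < s) :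
    deriv (modelg B) s * modelG B s = 1 - modelDefect B (modelPhase B s + 1) := by
  have hP0 := (modelPhase_pos hs).ne'
  have hrel := modelg_mul_modelG_mul hB hs
  rw [(hasDerivAt_modelg hB hs).deriv, modelDefect, add_sub_cancel_right]
  calc modelg B s * modelPhaseDeriv B s * (1 - (1 + 1 / B) / modelPhase B s) * modelG B s
      = (modelPhase B s + 1) / modelPhase B s * (1 - (1 + 1 / B) / modelPhase B s) := by
        rw [← hrel]; ring
    _ = 1 - (1 + (modelPhase B s + 1) / B) / modelPhase B s ^ 2 := by
        field_simp
        ring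

theorem hasDerivAt_modelDefect (hB : 1 ≤ B) (hr : 1 < r) :
    HasDerivAt (modelDefect B) (modelDefectDeriv B r) r := by
  have hr1 : r - 1 ≠ 0 := (sub_pos.2 hr).ne'
  refine ((((hasDerivAt_id' r).div_const B).const_add 1).fun_div
    (((hasDerivAt_id' r).sub_const 1).fun_pow 2) (pow_ne_zero 2 hr1)).congr_deriv ?_
  rw [modelDefectDeriv]
  field_simp
  ring

theorem differentiableAt_deriv_modelg (hB : 1 ≤ B) (hs : B ≠ 1 → 0 < s) :
    DifferentiableAt ℝ (deriv (modelg B)) s := by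
  have hdiff := ((hasDerivAt_modelg hB hs).fun_mul (hasDerivAt_modelPhaseDeriv hB hs)).fun_mul
    (((hasDerivAt_const s (1 + 1 / B)).fun_div (hasDerivAt_modelPhase hs)
      (modelPhase_pos hs).ne').const_sub 1)
  exact (hdiff.congr_of_eventuallyEq ((eventually_modelDomain hs).mono
    fun x hx => (hasDerivAt_modelg hB hx).deriv)).differentiableAt

theorem deriv_modelg_pos (hB : 1 ≤ B) (hs : B ≠ 1 → 0 < s) (hP : 2 < modelPhase B s) :
    0 < deriv (modelg B) s := by
  have hB' : 1 / B ≤ 1 := (div_le_one (by linarith)).2 hB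
  rw [(hasDerivAt_modelg hB hs).deriv]
  refine mul_pos (mul_pos (modelg_pos hB hs) (modelPhaseDeriv_pos hB hs)) (sub_pos.2 ?_)
  rw [div_lt_one (modelPhase_pos hs)]
  linarith

theorem invB2_modelg (hB : 1 ≤ B) (hs : B ≠ 1 → 0 < s) (hP : 2 < modelPhase B s) :
    invB2 (modelg B) (modelG B) s = -((modelPhase B s + 1) / modelPhase B s *
      Real.log (modelG B s) ^ 2 * modelDefectDeriv B (modelPhase B s + 1)) := by
  rcases eq_or_ne (Real.log (modelG B s)) 0 with hlog | hlog
  · simp only [invB2, hlog]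
    ring
  have hg := (modelg_pos hB hs).ne'
  have hG := (modelG_pos hB hs).ne'
  have hleft := hasDerivAt_deriv_mul_of_hasDerivAt (hasDerivAt_modelG hB hs)
    (differentiableAt_deriv_modelg hB hs) hg (deriv_modelg_pos hB hs hP).ne' hG hlog
  have hright := (((hasDerivAt_modelDefect hB (by linarith)).comp s
    ((hasDerivAt_modelPhase hs).add_const 1)).const_sub 1).congr_of_eventuallyEq
    ((eventually_modelDomain hs).mono fun x hx => deriv_modelg_mul_modelG hB hx)
  have heq := hleft.unique hright
  rw [div_eq_iff (mul_ne_zero (mul_ne_zero hg hG) (pow_ne_zero 2 hlog))] at heq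
  rw [heq, ← modelg_mul_modelG_mul hB hs]
  ring

theorem modelPhase_modelpsi (hB : 1 ≤ B) (hr : 1 < r) :
    modelPhase B (modelpsi B r) = r - 1 := by
  have hr1 : 0 < r - 1 := sub_pos.2 hr
  rw [modelPhase, modelpsi]
  split_ifs with h
  · exact Real.exp_log hr1
  · have hB1 : B - 1 ≠ 0 := sub_ne_zero.2 h
    rw [← Real.rpow_mul hr1.le, show (B - 1) / B * (B / (B - 1)) = 1 by field_simp, Real.rpow_one]

theorem modelpsi_pos (hB : B ≠ 1) (hr : 1 < r) : 0 < modelpsi B r := by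
  rw [modelpsi, if_neg hB]
  exact Real.rpow_pos_of_pos (sub_pos.2 hr) _

theorem modelv_eq_modelpsi : modelv B t = modelpsi B (1 - 2 * Real.log t) := by
  rw [modelv, modelpsi, show (1 : ℝ) - 2 * Real.log t - 1 = -2 * Real.log t by ring]

theorem exp_neg_modelLevel (hB : 1 ≤ B) (hr : 0 < r) :
    Real.exp (-modelLevel B r) = B * r / 4 * Real.exp (1 - r) := by
  rw [modelLevel, show -(r - 1 - Real.log (B * r / 4)) = Real.log (B * r / 4) + (1 - r) by ring,
    Real.exp_add, Real.exp_log (by positivity)]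

theorem modelG_modelpsi (hB : 1 ≤ B) (hr : 1 < r) :
    modelG B (modelpsi B r) = Real.exp (-modelLevel B r) := by
  rw [exp_neg_modelLevel hB (one_pos.trans hr), modelG_eq, modelPhase_modelpsi hB hr, neg_sub]
  ring

theorem invB1_modelg_modelpsi (hB : 1 ≤ B) (hr : 1 < r) :
    invB1 (modelg B) (modelG B) (modelpsi B r) = modelLevel B r * modelDefect B r := by
  rw [invB1, deriv_modelg_mul_modelG hB fun h => modelpsi_pos h hr, modelPhase_modelpsi hB hr,
    modelG_modelpsi hB hr, Real.log_exp]
  ring_nf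

theorem invB2_modelg_modelpsi (hB : 1 ≤ B) (hr : 3 < r) :
    invB2 (modelg B) (modelG B) (modelpsi B r) =
      -(r / (r - 1) * modelLevel B r ^ 2 * modelDefectDeriv B r) := by
  have hr1 : 1 < r := by linarith
  have hphase := modelPhase_modelpsi hB hr1
  rw [invB2_modelg hB (fun h => modelpsi_pos h hr1) (by linarith), hphase, modelG_modelpsi hB hr1,
    Real.log_exp, sub_add_cancel]
  ring_nf

theorem hasDerivAt_modelLevel (hB : 1 ≤ B) (hr : 0 < r) :
    HasDerivAt (modelLevel B) (1 - 1 / r) r := by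
  have hlog := ((hasDerivAt_id' r).const_mul B).div_const 4
  refine (((hasDerivAt_id' r).sub_const 1).fun_sub (hlog.log (by positivity))).congr_deriv ?_
  field_simp

theorem tendsto_modelLevel_div (hB : 1 ≤ B) :
    Tendsto (fun r => modelLevel B r / r) atTop (nhds 1) := by
  have hlog : Tendsto (fun r : ℝ => Real.log r / r) atTop (nhds 0) :=
    Real.isLittleO_log_id_atTop.tendsto_div_nhds_zero
  have hsum := ((tendsto_inv_atTop_zero (𝕜 := ℝ)).const_mul (1 + Real.log (B / 4))).add hlog
  rw [mul_zero, add_zero] at hsum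
  have hsub := hsum.const_sub 1
  rw [sub_zero] at hsub
  refine hsub.congr' ?_
  filter_upwards [eventually_gt_atTop 0] with r hr
  rw [modelLevel, mul_div_right_comm, Real.log_mul (by positivity) hr.ne']
  field_simp
  ring

theorem tendsto_modelLevel (hB : 1 ≤ B) : Tendsto (modelLevel B) atTop atTop := by
  refine ((tendsto_modelLevel_div hB).pos_mul_atTop one_pos tendsto_id).congr' ?_
  filter_upwards [eventually_ne_atTop 0] with r hr using div_mul_cancel₀ _ hr

end ModelPair

/-! ### The equation for the deviation -/

section BoxRetraction

variable {ρ : ℝ} {z w : ℂ}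

/-- The retraction of `ℂ` onto the square `|re z|, |im z| ≤ ρ`, acting coordinatewise. -/
noncomputable def clampSquare (ρ : ℝ) (z : ℂ) : ℂ :=
  (max (-ρ) (min ρ z.re) : ℝ) + (max (-ρ) (min ρ z.im) : ℝ) * Complex.I

theorem re_clampSquare : (clampSquare ρ z).re = max (-ρ) (min ρ z.re) := by
  simp only [clampSquare, Complex.add_re, Complex.ofReal_re, Complex.re_ofReal_mul, Complex.I_re,
    mul_zero, add_zero]

theorem im_clampSquare : (clampSquare ρ z).im = max (-ρ) (min ρ z.im) := by
  simp only [clampSquare, Complex.add_im, Complex.ofReal_im, Complex.im_ofReal_mul, Complex.I_im,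
    mul_one, zero_add]

theorem abs_max_neg_min_le (hρ : 0 ≤ ρ) (x : ℝ) : |max (-ρ) (min ρ x)| ≤ ρ :=
  abs_le.2 ⟨le_max_left _ _, max_le (by linarith) (min_le_left _ _)⟩

theorem abs_re_clampSquare_le (hρ : 0 ≤ ρ) : |(clampSquare ρ z).re| ≤ ρ := by
  rw [re_clampSquare]
  exact abs_max_neg_min_le hρ _

theorem abs_im_clampSquare_le (hρ : 0 ≤ ρ) : |(clampSquare ρ z).im| ≤ ρ := by
  rw [im_clampSquare]
  exact abs_max_neg_min_le hρ _

theorem clampSquare_of_norm_le (hz : ‖z‖ ≤ ρ) : clampSquare ρ z = z := by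
  obtain ⟨hre, hre'⟩ := abs_le.1 ((Complex.abs_re_le_norm z).trans hz)
  obtain ⟨him, him'⟩ := abs_le.1 ((Complex.abs_im_le_norm z).trans hz)
  rw [clampSquare, min_eq_right hre', max_eq_right hre, min_eq_right him', max_eq_right him,
    Complex.re_add_im]

theorem abs_max_neg_min_sub_le (x y : ℝ) :
    |max (-ρ) (min ρ x) - max (-ρ) (min ρ y)| ≤ |x - y| := by
  refine (abs_max_sub_max_le_max _ _ _ _).trans ?_
  rw [sub_self, abs_zero]
  refine max_le (abs_nonneg _) ((abs_min_sub_min_le_max _ _ _ _).trans ?_)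
  rw [sub_self, abs_zero]
  exact max_le (abs_nonneg _) le_rfl

theorem norm_clampSquare_sub_le : ‖clampSquare ρ z - clampSquare ρ w‖ ≤ ‖z - w‖ := by
  refine le_of_sq_le_sq ?_ (norm_nonneg _)
  rw [Complex.sq_norm, Complex.sq_norm, Complex.normSq_apply, Complex.normSq_apply]
  simp only [Complex.sub_re, Complex.sub_im, re_clampSquare, im_clampSquare]
  exact add_le_add (abs_le_iff_mul_self_le.1 (abs_max_neg_min_sub_le _ _))
    (abs_le_iff_mul_self_le.1 (abs_max_neg_min_sub_le _ _))

theorem continuousOn_clampSquare {ρ : ℝ → ℝ} {s : Set ℝ} (hρ : ContinuousOn ρ s) :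
    ContinuousOn (fun p : ℝ × ℂ => clampSquare (ρ p.1) p.2) (s ×ˢ Set.univ) := by
  have hρ' : ContinuousOn (fun p : ℝ × ℂ => ρ p.1) (s ×ˢ Set.univ) :=
    hρ.comp continuousOn_fst fun p hp => hp.1
  have hclamp : ∀ g : ℂ → ℝ, Continuous g →
      ContinuousOn (fun p : ℝ × ℂ => max (-ρ p.1) (min (ρ p.1) (g p.2))) (s ×ˢ Set.univ) :=
    fun g hg => hρ'.neg.sup (hρ'.inf (hg.comp continuous_snd).continuousOn)
  exact (Complex.continuous_ofReal.comp_continuousOn (hclamp _ Complex.continuous_re)).add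
    ((Complex.continuous_ofReal.comp_continuousOn (hclamp _ Complex.continuous_im)).mul
      continuousOn_const)

theorem exists_bounded_rotating_solution_of_square {κ δ r₀ : ℝ} (hδ : 0 ≤ δ) (hδκ : δ < κ)
    (hr₀ : 0 < r₀) {θ ω : ℝ → ℝ} (hθ : ∀ r, r₀ ≤ r → HasDerivAt θ (ω r) r) {ρ e : ℝ → ℝ}
    (hρ : ContinuousOn ρ (Set.Ici r₀)) {Φ : ℝ → ℂ → ℂ}
    (hΦ : ContinuousOn (fun p : ℝ × ℂ => Φ p.1 p.2)
      {p | r₀ ≤ p.1 ∧ |p.2.re| ≤ ρ p.1 ∧ |p.2.im| ≤ ρ p.1})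
    (hlip : ∀ r, r₀ ≤ r → ∀ z w : ℂ, |z.re| ≤ ρ r → |z.im| ≤ ρ r → |w.re| ≤ ρ r → |w.im| ≤ ρ r →
      ‖Φ r z - Φ r w‖ ≤ δ * ‖z - w‖)
    (hzero : ∀ r, r₀ ≤ r → ‖Φ r 0‖ ≤ e r) (he : AntitoneOn e (Set.Ici r₀))
    (heρ : ∀ r, r₀ ≤ r → e r / (κ - δ) ≤ ρ r) :
    ∃ ζ : ℝ → ℂ, (∀ r, r₀ ≤ r →
        HasDerivAt ζ ((κ * ζ r + Φ r (ζ r)) / r - Complex.I * ω r * ζ r) r) ∧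
      ∀ r, r₀ ≤ r → ‖ζ r‖ ≤ e r / (κ - δ) := by
  have hρ0 : ∀ r, r₀ ≤ r → 0 ≤ ρ r := fun r hr =>
    (div_nonneg ((norm_nonneg _).trans (hzero r hr)) (sub_pos.2 hδκ).le).trans (heρ r hr)
  obtain ⟨ζ, hζ, hbound⟩ := exists_bounded_rotating_solution hδ hδκ hr₀ hθ
    (Φ := fun r z => Φ r (clampSquare (ρ r) z)) (e := e)
    (hΦ.comp (continuousOn_fst.prodMk (continuousOn_clampSquare hρ)) fun p hp =>
      ⟨hp.1, abs_re_clampSquare_le (hρ0 _ hp.1), abs_im_clampSquare_le (hρ0 _ hp.1)⟩)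
    (fun r hr z w => (hlip r hr _ _ (abs_re_clampSquare_le (hρ0 r hr))
      (abs_im_clampSquare_le (hρ0 r hr)) (abs_re_clampSquare_le (hρ0 r hr))
      (abs_im_clampSquare_le (hρ0 r hr))).trans
        (mul_le_mul_of_nonneg_left norm_clampSquare_sub_le hδ))
    (fun r hr => by
      rw [clampSquare_of_norm_le (norm_zero.trans_le (hρ0 r hr))]
      exact hzero r hr) he
  refine ⟨ζ, fun r hr => ?_, hbound⟩
  simpa only [clampSquare_of_norm_le ((hbound r hr).trans (heρ r hr))] using hζ r hr

end BoxRetraction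

section DeviationEquation

/-- Right-hand side of the equation `φ'' = deviationForce B M r φ φ'` for the deviation `φ` of a
solution of the Emden–Fowler equation from its leading profile; `M r φ` is the tail defect of the
nonlinearity at the level reached at time `r`. -/
noncomputable def deviationForce (B : ℝ) (M : ℝ → ℝ → ℝ) (r φ ψ : ℝ) : ℝ :=
  M r φ * (1 - 1 / r + ψ) ^ 2 - 1 / r ^ 2 - Real.exp φ / (B * r)

/-- The part of the deviation equation which is small after substituting `φ = D + a` and
`φ' = Q / w + κ * a / r` with `w = √(B * r)`; the choice `κ = 1 / 4 + 1 / B` makes the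
damping of `a` and `Q` equal. -/
noncomputable def deviationResidual (B : ℝ) (M : ℝ → ℝ → ℝ) (D D' : ℝ → ℝ) (r a Q : ℝ) : ℝ :=
  √(B * r) * (r * M r (D r + a) * (1 - 1 / r + (Q / √(B * r) + (1 / 4 + 1 / B) * a / r)) ^ 2
    - 1 / r - (Real.exp (D r + a) - a) / B + (1 / 4 + 1 / B) * (1 - (1 / 4 + 1 / B)) * a / r
    + (1 / 4 + 1 / B) * D' r) - 2 / B * Q

/-- Conditions on the coefficient `M`, the correction `D` with derivative `D'` and the error
bound `e` under which `φ'' = deviationForce B M r φ φ'` has a solution of size `e` on `[r₀, ∞)`. -/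
structure IsDeviationProblem (B r₀ : ℝ) (M : ℝ → ℝ → ℝ) (D D' e : ℝ → ℝ) : Prop where
  one_le : 1 ≤ B
  pos : 0 < r₀
  continuousOn_coeff : ContinuousOn (fun p : ℝ × ℝ => M p.1 p.2) (Set.Ici r₀ ×ˢ Set.Icc (-1) 1)
  continuousOn_deriv : ContinuousOn D' (Set.Ici r₀)
  hasDerivAt : ∀ r, r₀ ≤ r → HasDerivAt D (D' r) r
  coeff_near : ∀ r, r₀ ≤ r → ∀ φ, |φ| ≤ 1 → |r * M r φ - 1 / B| ≤ 1 / 512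
  coeff_lipschitz : ∀ r, r₀ ≤ r → ∀ φ φ', |φ| ≤ 1 → |φ'| ≤ 1 →
    |M r φ - M r φ'| ≤ 8 / r ^ 2 * |φ - φ'|
  coeff_zero : ∀ r, r₀ ≤ r → M r 0 * (1 - 1 / r) ^ 2 = 1 / r ^ 2 + (1 + D r) / (B * r)
  antitone : AntitoneOn e (Set.Ici r₀)
  abs_correction_le : ∀ r, r₀ ≤ r → |D r| ≤ 2 * B * e r
  abs_deriv_le : ∀ r, r₀ ≤ r → |D' r| ≤ 6 * B * e r / r
  sqrt_le : ∀ r, r₀ ≤ r → 2048 * √(B * r) ≤ r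
  error_le : ∀ r, r₀ ≤ r → 16384 * B * e r * √(B * r) ≤ 1

theorem abs_exp_sub_id_sub_le {h x y : ℝ} (hh : h ≤ 1) (hx : |x| ≤ h) (hy : |y| ≤ h) :
    |Real.exp x - x - (Real.exp y - y)| ≤ 2 * h * |x - y| := by
  refine Convex.norm_image_sub_le_of_norm_hasDerivWithin_le (f := fun s => Real.exp s - s)
    (fun s _ => ((Real.hasDerivAt_exp s).sub (hasDerivAt_id s)).hasDerivWithinAt)
    (fun s hs => ?_) (convex_Icc _ _) (abs_le.1 hy) (abs_le.1 hx)
  have hs' : |s| ≤ h := abs_le.2 hs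
  rw [Real.norm_eq_abs]
  exact (Real.abs_exp_sub_one_le (hs'.trans hh)).trans (by linarith)

theorem exp_lipschitz_term_le {B w a b D : ℝ} (hB : 1 ≤ B) (hw : 1 ≤ w)
    (hD : |D| ≤ 1 / (128 * w)) (ha : |a| ≤ 1 / (128 * w)) (hb : |b| ≤ 1 / (128 * w)) :
    |w / B * (Real.exp (D + a) - (D + a) - (Real.exp (D + b) - (D + b)))| ≤ 1 / 32 * |a - b| := by
  have hw0 : 0 < w := one_pos.trans_le hw
  have hsum : ∀ c, |c| ≤ 1 / (128 * w) → |D + c| ≤ 1 / (64 * w) := fun c hc =>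
    (abs_add_le _ _).trans ((add_le_add hD hc).trans_eq (by field_simp; norm_num))
  have hexp := abs_exp_sub_id_sub_le
    (div_le_one_of_le₀ (by linarith) (by positivity)) (hsum a ha) (hsum b hb)
  rw [add_sub_add_left_eq_sub] at hexp
  rw [abs_mul, abs_of_pos (by positivity : 0 < w / B)]
  calc w / B * |Real.exp (D + a) - (D + a) - (Real.exp (D + b) - (D + b))|
      ≤ w * (2 * (1 / (64 * w)) * |a - b|) :=
        mul_le_mul (div_le_self hw0.le hB) hexp (abs_nonneg _) hw0.le
    _ = 1 / 32 * |a - b| := by field_simp; ring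

namespace IsDeviationProblem

variable {B r₀ r a b Q : ℝ} {M : ℝ → ℝ → ℝ} {D D' e : ℝ → ℝ}

theorem rpos (h : IsDeviationProblem B r₀ M D D' e) (hr : r₀ ≤ r) : 0 < r := h.pos.trans_le hr

theorem sqrt_pos (h : IsDeviationProblem B r₀ M D D' e) (hr : r₀ ≤ r) : 0 < √(B * r) :=
  Real.sqrt_pos.2 (mul_pos (one_pos.trans_le h.one_le) (h.rpos hr))

theorem sq_sqrt (h : IsDeviationProblem B r₀ M D D' e) (hr : r₀ ≤ r) : √(B * r) ^ 2 = B * r :=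
  Real.sq_sqrt (mul_pos (one_pos.trans_le h.one_le) (h.rpos hr)).le

theorem le_sqrt (h : IsDeviationProblem B r₀ M D D' e) (hr : r₀ ≤ r) : 2048 ≤ √(B * r) := by
  have hw := h.sqrt_pos hr
  have hsq : r ≤ √(B * r) * √(B * r) := by
    rw [← sq, h.sq_sqrt hr]
    exact le_mul_of_one_le_left (h.rpos hr).le h.one_le
  exact le_of_mul_le_mul_right ((h.sqrt_le r hr).trans hsq) hw

theorem sqrt_div_le (h : IsDeviationProblem B r₀ M D D' e) (hr : r₀ ≤ r) :
    √(B * r) / r ≤ 1 / 2048 := by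
  rw [div_le_div_iff₀ (h.rpos hr) (by norm_num)]
  linarith [h.sqrt_le r hr]

theorem abs_le_of_sqrt (h : IsDeviationProblem B r₀ M D D' e) (hr : r₀ ≤ r) :
    |D r| ≤ 1 / (8192 * √(B * r)) := by
  refine (h.abs_correction_le r hr).trans ?_
  rw [le_div_iff₀ (by linarith [h.sqrt_pos hr])]
  linarith [h.error_le r hr]

theorem error_nonneg (h : IsDeviationProblem B r₀ M D D' e) (hr : r₀ ≤ r) : 0 ≤ e r := by
  have hB : 0 < 2 * B := by linarith [h.one_le]
  exact (mul_nonneg_iff_of_pos_left hB).1 ((abs_nonneg _).trans (h.abs_correction_le r hr))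

theorem rate_le (h : IsDeviationProblem B r₀ M D D' e) : 1 / 4 + 1 / B ≤ 5 / 4 := by
  linarith [div_le_one_of_le₀ h.one_le (zero_le_one.trans h.one_le)]

theorem le_rate (h : IsDeviationProblem B r₀ M D D' e) : 1 / 4 ≤ 1 / 4 + 1 / B :=
  le_add_of_nonneg_right (one_div_nonneg.2 (zero_le_one.trans h.one_le))

theorem one_div_le (h : IsDeviationProblem B r₀ M D D' e) (hr : r₀ ≤ r) : 1 / r ≤ 1 / 4194304 :=
  one_div_le_one_div_of_le (by norm_num) (by linarith [h.sqrt_le r hr, h.le_sqrt hr])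

theorem abs_velocity_le (h : IsDeviationProblem B r₀ M D D' e) (hr : r₀ ≤ r)
    (ha : |a| ≤ 1 / (128 * √(B * r))) (hQ : |Q| ≤ 1 / (128 * √(B * r))) :
    |Q / √(B * r) + (1 / 4 + 1 / B) * a / r| ≤ 1 / 4096 := by
  have hw := h.le_sqrt hr
  have hsmall : 1 / (128 * √(B * r)) ≤ 1 := div_le_one_of_le₀ (by linarith) (by linarith)
  have hQw : |Q / √(B * r)| ≤ 1 / 8192 := by
    rw [abs_div, abs_of_pos (h.sqrt_pos hr), div_le_iff₀ (h.sqrt_pos hr)]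
    have hinv : 1 / (128 * √(B * r)) ≤ 1 / (128 * 2048) := by gcongr
    linarith
  have har : |(1 / 4 + 1 / B) * a / r| ≤ 1 / 8192 := by
    rw [mul_div_right_comm, abs_mul, abs_of_nonneg
      (div_nonneg ((by norm_num : (0 : ℝ) ≤ 1 / 4).trans h.le_rate) (h.rpos hr).le)]
    have hrate : (1 / 4 + 1 / B) / r ≤ 5 / 4 * (1 / 4194304) := by
      rw [div_eq_mul_one_div]
      exact mul_le_mul h.rate_le (h.one_div_le hr) (one_div_nonneg.2 (h.rpos hr).le) (by norm_num)
    exact (mul_le_mul hrate (ha.trans hsmall) (abs_nonneg _) (by norm_num)).trans (by norm_num)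
  exact (abs_add_le _ _).trans ((add_le_add hQw har).trans_eq (by norm_num))

theorem abs_coeff_mul_sub_le (h : IsDeviationProblem B r₀ M D D' e) (hr : r₀ ≤ r) {φ ψ χ : ℝ}
    (hφ : |φ| ≤ 1) (hψ : |ψ| ≤ 1 / 4096) (hχ : |χ| ≤ 1 / 4096) :
    |r * M r φ * (2 * (1 - 1 / r) + ψ + χ) - 2 / B| ≤ 1 / 64 := by
  have hinv : 0 < 1 / r := one_div_pos.2 (h.rpos hr)
  have hinv' := h.one_div_le hr
  obtain ⟨hψ₁, hψ₂⟩ := abs_le.1 hψ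
  obtain ⟨hχ₁, hχ₂⟩ := abs_le.1 hχ
  have hB : |1 / B| ≤ 1 := by
    rw [abs_of_nonneg (one_div_nonneg.2 (zero_le_one.trans h.one_le))]
    exact div_le_one_of_le₀ h.one_le (zero_le_one.trans h.one_le)
  have hfactor : |2 * (1 - 1 / r) + ψ + χ - 2| ≤ 1 / 1024 := abs_le.2 ⟨by linarith, by linarith⟩
  have hfactor' : |2 * (1 - 1 / r) + ψ + χ| ≤ 3 := abs_le.2 ⟨by linarith, by linarith⟩
  calc |r * M r φ * (2 * (1 - 1 / r) + ψ + χ) - 2 / B|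
      = |(r * M r φ - 1 / B) * (2 * (1 - 1 / r) + ψ + χ)
          + 1 / B * (2 * (1 - 1 / r) + ψ + χ - 2)| := by ring_nf
    _ ≤ 1 / 512 * 3 + 1 * (1 / 1024) := by
        refine (abs_add_le _ _).trans (add_le_add ?_ ?_) <;> rw [abs_mul]
        · exact mul_le_mul (h.coeff_near r hr φ hφ) hfactor' (abs_nonneg _) (by norm_num)
        · exact mul_le_mul hB hfactor (abs_nonneg _) zero_le_one
    _ ≤ 1 / 64 := by norm_num

theorem abs_add_le_one (h : IsDeviationProblem B r₀ M D D' e) (hr : r₀ ≤ r)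
    (ha : |a| ≤ 1 / (128 * √(B * r))) : |D r + a| ≤ 1 := by
  have hw := h.le_sqrt hr
  have h₁ : 1 / (8192 * √(B * r)) ≤ 1 / 2 := one_div_le_one_div_of_le (by norm_num) (by linarith)
  have h₂ : 1 / (128 * √(B * r)) ≤ 1 / 2 := one_div_le_one_div_of_le (by norm_num) (by linarith)
  linarith [abs_add_le (D r) a, h.abs_le_of_sqrt hr]

theorem abs_coeff_sub_mul_sq_le (h : IsDeviationProblem B r₀ M D D' e) (hr : r₀ ≤ r)
    {φ φ' ψ : ℝ} (hφ : |φ| ≤ 1) (hφ' : |φ'| ≤ 1) (hψ : |ψ| ≤ 1 / 4096) :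
    |√(B * r) * r * (M r φ - M r φ') * (1 - 1 / r + ψ) ^ 2| ≤ 1 / 128 * |φ - φ'| := by
  have hr0 := h.rpos hr
  have hw := h.sqrt_pos hr
  have hinv : 0 < 1 / r := one_div_pos.2 hr0
  have hinv' := h.one_div_le hr
  obtain ⟨hψ₁, hψ₂⟩ := abs_le.1 hψ
  have hsq : |(1 - 1 / r + ψ) ^ 2| ≤ 2 := by
    rw [abs_of_nonneg (sq_nonneg _)]
    nlinarith
  rw [abs_mul, abs_mul, abs_of_pos (mul_pos hw hr0)]
  calc √(B * r) * r * |M r φ - M r φ'| * |(1 - 1 / r + ψ) ^ 2|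
      ≤ √(B * r) * r * (8 / r ^ 2 * |φ - φ'|) * 2 := by
        gcongr
        exact h.coeff_lipschitz r hr φ φ' hφ hφ'
    _ = 16 * (√(B * r) / r) * |φ - φ'| := by field_simp; ring
    _ ≤ 1 / 128 * |φ - φ'| := by
        gcongr
        linarith [h.sqrt_div_le hr]

theorem abs_damping_term_le (h : IsDeviationProblem B r₀ M D D' e) (hr : r₀ ≤ r) {L c : ℝ}
    (hL : |L - 2 / B| ≤ 1 / 64) :
    |√(B * r) / r * ((1 / 4 + 1 / B) * (L + (1 - (1 / 4 + 1 / B)))) * c| ≤ 1 / 256 * |c| := by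
  have hrate := h.le_rate
  have hrate' := h.rate_le
  have hB : 2 / B ≤ 2 := div_le_self zero_le_two h.one_le
  have hB' : 0 ≤ 2 / B := div_nonneg zero_le_two (zero_le_one.trans h.one_le)
  obtain ⟨hL₁, hL₂⟩ := abs_le.1 hL
  have hsum : |L + (1 - (1 / 4 + 1 / B))| ≤ 4 := abs_le.2 ⟨by linarith, by linarith⟩
  have hprod : |(1 / 4 + 1 / B) * (L + (1 - (1 / 4 + 1 / B)))| ≤ 5 := by
    rw [abs_mul, abs_of_nonneg (by linarith : 0 ≤ 1 / 4 + 1 / B)]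
    exact (mul_le_mul hrate' hsum (abs_nonneg _) (by norm_num)).trans (by norm_num)
  rw [abs_mul, abs_mul, abs_of_pos (div_pos (h.sqrt_pos hr) (h.rpos hr))]
  refine mul_le_mul_of_nonneg_right ?_ (abs_nonneg c)
  exact (mul_le_mul (h.sqrt_div_le hr) hprod (abs_nonneg _) (by norm_num)).trans (by norm_num)

theorem residual_sub_eq (h : IsDeviationProblem B r₀ M D D' e) (hr : r₀ ≤ r) {P κ ψ χ : ℝ}
    (hκ : κ = 1 / 4 + 1 / B) (hψ : ψ = Q / √(B * r) + κ * a / r)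
    (hχ : χ = P / √(B * r) + κ * b / r) :
    deviationResidual B M D D' r a Q - deviationResidual B M D D' r b P =
      √(B * r) * r * (M r (D r + a) - M r (D r + b)) * (1 - 1 / r + ψ) ^ 2
        - √(B * r) / B * (Real.exp (D r + a) - (D r + a) - (Real.exp (D r + b) - (D r + b)))
        + (r * M r (D r + b) * (2 * (1 - 1 / r) + ψ + χ) - 2 / B) * (Q - P)
        + √(B * r) / r * (κ * (r * M r (D r + b) * (2 * (1 - 1 / r) + ψ + χ) + (1 - κ)))
          * (a - b) := by
  have hr0 := h.rpos hr
  have hw := h.sqrt_pos hr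
  have hψχ : √(B * r) * (ψ - χ) = Q - P + √(B * r) / r * κ * (a - b) := by
    rw [hψ, hχ]
    field_simp
    ring
  simp only [deviationResidual, ← hκ, ← hψ, ← hχ]
  clear hψ hχ
  linear_combination r * M r (D r + b) * (2 * (1 - 1 / r) + ψ + χ) * hψχ

theorem abs_residual_sub_le (h : IsDeviationProblem B r₀ M D D' e) (hr : r₀ ≤ r) {P : ℝ}
    (ha : |a| ≤ 1 / (128 * √(B * r))) (hQ : |Q| ≤ 1 / (128 * √(B * r)))
    (hb : |b| ≤ 1 / (128 * √(B * r))) (hP : |P| ≤ 1 / (128 * √(B * r))) :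
    |deviationResidual B M D D' r a Q - deviationResidual B M D D' r b P|
      ≤ 1 / 16 * (|a - b| + |Q - P|) := by
  have hw := h.sqrt_pos hr
  have hD : |D r| ≤ 1 / (128 * √(B * r)) := (h.abs_le_of_sqrt hr).trans (by gcongr; norm_num)
  have hψ := h.abs_velocity_le hr ha hQ
  have hφ' := h.abs_add_le_one hr hb
  have hexp := exp_lipschitz_term_le h.one_le (by linarith [h.le_sqrt hr]) hD ha hb
  have hcoeff := h.abs_coeff_sub_mul_sq_le hr (h.abs_add_le_one hr ha) hφ' hψ
  rw [add_sub_add_left_eq_sub] at hcoeff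
  have hL := h.abs_coeff_mul_sub_le hr hφ' hψ (h.abs_velocity_le hr hb hP)
  have hlin := mul_le_mul_of_nonneg_right hL (abs_nonneg (Q - P))
  rw [← abs_mul] at hlin
  have hdamp := h.abs_damping_term_le hr (c := a - b) hL
  rw [h.residual_sub_eq hr rfl rfl rfl]
  refine (abs_add_le _ _).trans ((add_le_add ((abs_add_le _ _).trans
    (add_le_add ((abs_sub _ _).trans (add_le_add hcoeff hexp)) hlin)) hdamp).trans ?_)
  linarith [abs_nonneg (a - b), abs_nonneg (Q - P)]

theorem abs_exp_term_le (h : IsDeviationProblem B r₀ M D D' e) (hr : r₀ ≤ r) :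
    |√(B * r) / B * (Real.exp (D r) - 1 - D r)| ≤ |D r| := by
  have hB := zero_lt_one.trans_le h.one_le
  have hw := h.sqrt_pos hr
  have hD1 : |D r| ≤ 1 := by
    simpa only [add_zero] using h.abs_add_le_one (a := 0) hr (by rw [abs_zero]; positivity)
  have hDw : √(B * r) * |D r| ≤ 1 := by
    have := (le_div_iff₀ (by positivity)).1 (h.abs_le_of_sqrt hr)
    nlinarith [abs_nonneg (D r)]
  rw [abs_mul, abs_of_pos (div_pos hw hB)]
  calc √(B * r) / B * |Real.exp (D r) - 1 - D r| ≤ √(B * r) * D r ^ 2 :=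
        mul_le_mul (div_le_self hw.le h.one_le) (Real.abs_exp_sub_one_sub_id_le hD1)
          (abs_nonneg _) hw.le
    _ = √(B * r) * |D r| * |D r| := by rw [← sq_abs]; ring
    _ ≤ |D r| := mul_le_of_le_one_left (abs_nonneg _) hDw

theorem abs_deriv_term_le (h : IsDeviationProblem B r₀ M D D' e) (hr : r₀ ≤ r) :
    |(1 / 4 + 1 / B) * √(B * r) * D' r| ≤ B * e r := by
  have := h.rpos hr
  have hw := h.sqrt_pos hr
  have hrate : 0 ≤ 1 / 4 + 1 / B := (by norm_num : (0 : ℝ) ≤ 1 / 4).trans h.le_rate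
  have hBe : 0 ≤ B * e r := mul_nonneg (zero_le_one.trans h.one_le) (h.error_nonneg hr)
  rw [abs_mul, abs_of_nonneg (mul_nonneg hrate hw.le)]
  calc (1 / 4 + 1 / B) * √(B * r) * |D' r| ≤ 5 / 4 * √(B * r) * (6 * B * e r / r) := by
        gcongr
        · exact h.rate_le
        · exact h.abs_deriv_le r hr
    _ = 15 / 2 * (√(B * r) / r) * (B * e r) := by ring
    _ ≤ B * e r := mul_le_of_le_one_left hBe (by linarith [h.sqrt_div_le hr])

theorem abs_residual_zero_le (h : IsDeviationProblem B r₀ M D D' e) (hr : r₀ ≤ r) :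
    |deviationResidual B M D D' r 0 0| ≤ 10 * B * e r := by
  have hr0 := h.rpos hr
  have hw := h.sqrt_pos hr
  have hD1 : |D r| ≤ 1 := by
    simpa only [add_zero] using h.abs_add_le_one (a := 0) hr (by rw [abs_zero]; positivity)
  have hcoeff := h.abs_coeff_sub_mul_sq_le hr (ψ := 0) (φ' := 0) hD1 (by simp) (by norm_num)
  rw [add_zero, sub_zero] at hcoeff
  have hsplit : deviationResidual B M D D' r 0 0 =
      √(B * r) * r * (M r (D r) - M r 0) * (1 - 1 / r) ^ 2
        - √(B * r) / B * (Real.exp (D r) - 1 - D r) + (1 / 4 + 1 / B) * √(B * r) * D' r := by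
    have hB := zero_lt_one.trans_le h.one_le
    have hzero : √(B * r) * r * (M r 0 * (1 - 1 / r) ^ 2)
        = √(B * r) / r + √(B * r) / B * (1 + D r) := by
      rw [h.coeff_zero r hr]
      field_simp
    simp only [deviationResidual, add_zero, zero_div, mul_zero, sub_zero]
    linear_combination hzero
  rw [hsplit]
  refine (abs_add_le _ _).trans ((add_le_add ((abs_sub _ _).trans
    (add_le_add hcoeff (h.abs_exp_term_le hr))) (h.abs_deriv_term_le hr)).trans ?_)
  have hBe : 0 ≤ B * e r := mul_nonneg (zero_le_one.trans h.one_le) (h.error_nonneg hr)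
  linarith [h.abs_correction_le r hr]

/-- The Lipschitz perturbation in the complex equation for `ζ = a + Q * I`. -/
noncomputable def perturbation (B : ℝ) (M : ℝ → ℝ → ℝ) (D D' : ℝ → ℝ) (r : ℝ) (z : ℂ) : ℂ :=
  ((-(r * D' r) : ℝ) : ℂ) + (deviationResidual B M D D' r z.re z.im : ℝ) * Complex.I

theorem re_perturbation (z : ℂ) : (perturbation B M D D' r z).re = -(r * D' r) := by
  simp only [perturbation, Complex.add_re, Complex.ofReal_re, Complex.re_ofReal_mul, Complex.I_re,
    mul_zero, add_zero]

theorem im_perturbation (z : ℂ) :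
    (perturbation B M D D' r z).im = deviationResidual B M D D' r z.re z.im := by
  simp only [perturbation, Complex.add_im, Complex.ofReal_im, Complex.im_ofReal_mul, Complex.I_im,
    mul_one, zero_add]

theorem norm_perturbation_sub_le (h : IsDeviationProblem B r₀ M D D' e) (hr : r₀ ≤ r) {z w : ℂ}
    (hz : |z.re| ≤ 1 / (128 * √(B * r))) (hz' : |z.im| ≤ 1 / (128 * √(B * r)))
    (hw : |w.re| ≤ 1 / (128 * √(B * r))) (hw' : |w.im| ≤ 1 / (128 * √(B * r))) :
    ‖perturbation B M D D' r z - perturbation B M D D' r w‖ ≤ 1 / 8 * ‖z - w‖ := by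
  rw [perturbation, perturbation, add_sub_add_left_eq_sub, ← sub_mul, norm_mul, Complex.norm_I,
    mul_one, ← Complex.ofReal_sub, Complex.norm_real, Real.norm_eq_abs]
  have hre := Complex.abs_re_le_norm (z - w)
  have him := Complex.abs_im_le_norm (z - w)
  rw [Complex.sub_re] at hre
  rw [Complex.sub_im] at him
  linarith [h.abs_residual_sub_le hr hz hz' hw hw']

theorem norm_perturbation_zero_le (h : IsDeviationProblem B r₀ M D D' e) (hr : r₀ ≤ r) :
    ‖perturbation B M D D' r 0‖ ≤ 16 * B * e r := by
  have hD' : |-(r * D' r)| ≤ 6 * B * e r := by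
    rw [abs_neg, abs_mul, abs_of_pos (h.rpos hr), mul_comm]
    exact (le_div_iff₀ (h.rpos hr)).1 (h.abs_deriv_le r hr)
  refine (norm_add_le _ _).trans ?_
  rw [norm_mul, Complex.norm_I, mul_one, Complex.norm_real, Complex.norm_real, Real.norm_eq_abs,
    Real.norm_eq_abs, Complex.zero_re, Complex.zero_im]
  linarith [h.abs_residual_zero_le hr]

theorem continuousOn_perturbation (h : IsDeviationProblem B r₀ M D D' e) :
    ContinuousOn (fun p : ℝ × ℂ => perturbation B M D D' p.1 p.2)
      {p | r₀ ≤ p.1 ∧ |p.2.re| ≤ 1 / (128 * √(B * p.1)) ∧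
        |p.2.im| ≤ 1 / (128 * √(B * p.1))} := by
  set s := {p : ℝ × ℂ | r₀ ≤ p.1 ∧ |p.2.re| ≤ 1 / (128 * √(B * p.1)) ∧
    |p.2.im| ≤ 1 / (128 * √(B * p.1))}
  have hfst : ContinuousOn (fun p : ℝ × ℂ => p.1) s := continuousOn_fst
  have hmaps : Set.MapsTo (fun p : ℝ × ℂ => p.1) s (Set.Ici r₀) := fun p hp => hp.1
  have hD : ContinuousOn (fun p : ℝ × ℂ => D p.1) s := ContinuousOn.comp
    (fun r hr => (h.hasDerivAt r hr).continuousAt.continuousWithinAt) hfst hmaps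
  have hD' : ContinuousOn (fun p : ℝ × ℂ => D' p.1) s := h.continuousOn_deriv.comp hfst hmaps
  have hre : ContinuousOn (fun p : ℝ × ℂ => p.2.re) s :=
    (Complex.continuous_re.comp continuous_snd).continuousOn
  have him : ContinuousOn (fun p : ℝ × ℂ => p.2.im) s :=
    (Complex.continuous_im.comp continuous_snd).continuousOn
  have hM : ContinuousOn (fun p : ℝ × ℂ => M p.1 (D p.1 + p.2.re)) s :=
    h.continuousOn_coeff.comp
      (hfst.prodMk (hD.add hre))
      fun p hp => ⟨hp.1, abs_le.1 (h.abs_add_le_one hp.1 hp.2.1)⟩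
  have hr : ∀ p ∈ s, p.1 ≠ 0 := fun p hp => (h.rpos hp.1).ne'
  have hw : ∀ p ∈ s, √(B * p.1) ≠ 0 := fun p hp => (h.sqrt_pos hp.1).ne'
  refine (Complex.continuous_ofReal.comp_continuousOn (hfst.mul hD').neg).add
    ((Complex.continuous_ofReal.comp_continuousOn ?_).mul continuousOn_const)
  have hquad : ContinuousOn (fun p : ℝ × ℂ => p.1 * M p.1 (D p.1 + p.2.re) *
      (1 - 1 / p.1 + (p.2.im / √(B * p.1) + (1 / 4 + 1 / B) * p.2.re / p.1)) ^ 2 - 1 / p.1) s :=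
    ((hfst.mul hM).mul (by fun_prop (disch := assumption))).sub
      (by fun_prop (disch := assumption))
  have hexp : ContinuousOn (fun p : ℝ × ℂ => (Real.exp (D p.1 + p.2.re) - p.2.re) / B) s :=
    ((Real.continuous_exp.comp_continuousOn (hD.add hre)).sub hre).div_const B
  exact (ContinuousOn.mul (by fun_prop) (((hquad.sub hexp).add
    (by fun_prop (disch := assumption))).add (continuousOn_const.mul hD'))).sub (by fun_prop)

/-- Writing `ζ = a + Q * I`, the function `φ = D + a` satisfies `φ' = Q / √(B * r) + κ * a / r`,
and differentiating once more removes the rotation and leaves `deviationForce`. -/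
theorem hasDerivAt_velocity (h : IsDeviationProblem B r₀ M D D' e) (hr : r₀ ≤ r) {a Q : ℝ → ℝ}
    (ha : HasDerivAt a ((1 / 4 + 1 / B) * a r / r + Q r / √(B * r) - D' r) r)
    (hQ : HasDerivAt Q ((1 / 4 + 1 / B) * Q r / r + deviationResidual B M D D' r (a r) (Q r) / r
      - a r / √(B * r)) r) :
    HasDerivAt (fun r => Q r / √(B * r) + (1 / 4 + 1 / B) * a r / r)
      (deviationForce B M r (D r + a r) (Q r / √(B * r) + (1 / 4 + 1 / B) * a r / r)) r := by
  have hB := zero_lt_one.trans_le h.one_le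
  have hr0 := h.rpos hr
  have hw := h.sqrt_pos hr
  have hsqrt := ((hasDerivAt_id r).const_mul B).sqrt (mul_pos hB hr0).ne'
  refine ((hQ.fun_div hsqrt hw.ne').fun_add ((ha.const_mul (1 / 4 + 1 / B)).fun_div
    (hasDerivAt_id r) hr0.ne')).congr_deriv ?_
  have hwr : √(B * r) ^ 2 / B = r := by
    rw [h.sq_sqrt hr, mul_div_cancel_left₀ _ hB.ne']
  simp only [deviationForce, deviationResidual, id, mul_one]
  generalize D' r = d, a r = α, Q r = q, √(B * r) = w at *
  subst hwr
  field_simp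
  ring

theorem exists_complex_solution (h : IsDeviationProblem B r₀ M D D' e) :
    ∃ ζ : ℝ → ℂ, ∀ r, r₀ ≤ r → HasDerivAt ζ
        (((1 / 4 + 1 / B : ℝ) * ζ r + perturbation B M D D' r (ζ r)) / r
          - Complex.I * (1 / √(B * r) : ℝ) * ζ r) r ∧
      ‖ζ r‖ ≤ 128 * B * e r ∧ ‖ζ r‖ ≤ 1 / (128 * √(B * r)) := by
  have hB := zero_lt_one.trans_le h.one_le
  have hδκ : (1 / 8 : ℝ) < 1 / 4 + 1 / B := by linarith [h.le_rate]
  have hquot : ∀ r, r₀ ≤ r → 16 * B * e r / (1 / 4 + 1 / B - 1 / 8) ≤ 128 * B * e r := by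
    intro r hr
    have := mul_nonneg hB.le (h.error_nonneg hr)
    rw [div_le_iff₀ (sub_pos.2 hδκ)]
    nlinarith [h.le_rate]
  have hρ : ContinuousOn (fun r => 1 / (128 * √(B * r))) (Set.Ici r₀) :=
    continuousOn_const.div (by fun_prop) fun r hr =>
      (mul_pos (by norm_num) (h.sqrt_pos hr)).ne'
  have heρ : ∀ r, r₀ ≤ r → 128 * B * e r ≤ 1 / (128 * √(B * r)) := by
    intro r hr
    rw [le_div_iff₀ (mul_pos (by norm_num) (h.sqrt_pos hr))]
    linarith [h.error_le r hr]
  have hθ : ∀ r, r₀ ≤ r → HasDerivAt (fun r => 2 / B * √(B * r)) (1 / √(B * r)) r := by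
    intro r hr
    refine ((((hasDerivAt_id r).const_mul B).sqrt
      (mul_pos hB (h.rpos hr)).ne').const_mul (2 / B)).congr_deriv ?_
    simp only [id, mul_one]
    field_simp
  obtain ⟨ζ, hζ, hbound⟩ := exists_bounded_rotating_solution_of_square (by norm_num) hδκ h.pos hθ
    hρ h.continuousOn_perturbation
    (fun r hr _ _ hz hz' hw hw' => h.norm_perturbation_sub_le hr hz hz' hw hw')
    (fun r hr => h.norm_perturbation_zero_le hr)
    (fun x hx y hy hxy => mul_le_mul_of_nonneg_left (h.antitone hx hy hxy) (by positivity))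
    (fun r hr => (hquot r hr).trans (heρ r hr))
  exact ⟨ζ, fun r hr => ⟨hζ r hr, (hbound r hr).trans (hquot r hr),
    (hbound r hr).trans ((hquot r hr).trans (heρ r hr))⟩⟩

theorem exists_solution (h : IsDeviationProblem B r₀ M D D' e) :
    ∃ φ ψ : ℝ → ℝ, ∀ r, r₀ ≤ r → HasDerivAt φ (ψ r) r ∧
      HasDerivAt ψ (deviationForce B M r (φ r) (ψ r)) r ∧ |φ r| ≤ 130 * B * e r ∧ |φ r| ≤ 1 := by
  obtain ⟨ζ, hζ⟩ := h.exists_complex_solution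
  have hre : ∀ r, r₀ ≤ r → HasDerivAt (fun r => (ζ r).re)
      ((1 / 4 + 1 / B) * (ζ r).re / r + (ζ r).im / √(B * r) - D' r) r := by
    intro r hr
    refine (Complex.reCLM.hasFDerivAt.comp_hasDerivAt r (hζ r hr).1).congr_deriv ?_
    have hr0 := h.rpos hr
    simp only [Complex.reCLM_apply, Complex.sub_re, Complex.div_ofReal_re, Complex.add_re,
      re_perturbation, Complex.mul_re, Complex.mul_im, Complex.I_re, Complex.I_im,
      Complex.ofReal_re, Complex.ofReal_im]
    field_simp
    ring
  have him : ∀ r, r₀ ≤ r → HasDerivAt (fun r => (ζ r).im)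
      ((1 / 4 + 1 / B) * (ζ r).im / r + deviationResidual B M D D' r (ζ r).re (ζ r).im / r
        - (ζ r).re / √(B * r)) r := by
    intro r hr
    refine (Complex.imCLM.hasFDerivAt.comp_hasDerivAt r (hζ r hr).1).congr_deriv ?_
    simp only [Complex.imCLM_apply, Complex.sub_im, Complex.div_ofReal_im, Complex.add_im,
      im_perturbation, Complex.mul_re, Complex.mul_im, Complex.I_re, Complex.I_im,
      Complex.ofReal_re, Complex.ofReal_im]
    ring
  refine ⟨fun r => D r + (ζ r).re, _, fun r hr => ⟨?_, h.hasDerivAt_velocity hr (hre r hr)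
    (him r hr), ?_, h.abs_add_le_one hr ((Complex.abs_re_le_norm _).trans (hζ r hr).2.2)⟩⟩
  · refine ((h.hasDerivAt r hr).add (hre r hr)).congr_deriv ?_
    ring
  · have := (Complex.abs_re_le_norm (ζ r)).trans (hζ r hr).2.1
    linarith [abs_add_le (D r) (ζ r).re, h.abs_correction_le r hr]

end IsDeviationProblem

end DeviationEquation

/-! ### Comparison with the model at equal tail integrals -/

section CoefficientCorrection

variable {f : ℝ → ℝ} {s₀ B r ε φ φ' : ℝ}

/-- The difference `m(Y(r)) - d(r)` between the defects of `f` and of the model at equal tail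
integrals, where `Y = modelLevel B`. -/
noncomputable def defectGap (f : ℝ → ℝ) (s₀ B r : ℝ) : ℝ :=
  tailDefect f s₀ (modelLevel B r) - modelDefect B r

/-- The derivative of `defectGap f s₀ B`. -/
noncomputable def defectGapDeriv (f : ℝ → ℝ) (s₀ B r : ℝ) : ℝ :=
  -((1 - 1 / r) / modelLevel B r ^ 2) * (invB2 f (Fint f) (tailInv f s₀ (modelLevel B r)) +
    r / (r - 1) * modelLevel B r ^ 2 * modelDefectDeriv B r)

/-- The forcing term `D(r)` of the deviation equation, normalised so that the coefficient at
deviation zero satisfies `IsDeviationProblem.coeff_zero`. -/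
noncomputable def coeffCorrection (f : ℝ → ℝ) (s₀ B r : ℝ) : ℝ :=
  B * ((r - 1) ^ 2 / r) * defectGap f s₀ B r

/-- The derivative of `coeffCorrection f s₀ B`. -/
noncomputable def coeffCorrectionDeriv (f : ℝ → ℝ) (s₀ B r : ℝ) : ℝ :=
  B * (1 - 1 / r ^ 2) * defectGap f s₀ B r + B * ((r - 1) ^ 2 / r) * defectGapDeriv f s₀ B r

/-- The quantitative conditions at the Emden–Fowler variable `r` under which the deviation from
the model is controlled by `ε`: `r` is large, the tail functions are well behaved on `[r/2, ∞)`,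
and the quantities `1/B₁`, `1/B₂` of `f` and of the model differ by at most `ε`. -/
structure IsLevelControlled (f : ℝ → ℝ) (s₀ B ε r : ℝ) : Prop where
  four_le : 4 ≤ r
  le_level : 3 / 4 * r ≤ modelLevel B r
  mem_image : ∀ y, r / 2 ≤ y → y ∈ logTail f '' Set.Ioi s₀
  abs_invB2_le : ∀ y, r / 2 ≤ y → |invB2 f (Fint f) (tailInv f s₀ y)| ≤ 2
  abs_mul_defectGap_le : |modelLevel B r * defectGap f s₀ B r| ≤ ε
  abs_invB2_sub_le : |invB2 f (Fint f) (tailInv f s₀ (modelLevel B r)) +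
    r / (r - 1) * modelLevel B r ^ 2 * modelDefectDeriv B r| ≤ ε

namespace IsLevelControlled

section

variable (h : IsLevelControlled f s₀ B ε r)

include h

theorem pos : 0 < r := by linarith [h.four_le]

theorem error_nonneg : 0 ≤ ε := (abs_nonneg _).trans h.abs_mul_defectGap_le

theorem level_pos : 0 < modelLevel B r := by linarith [h.four_le, h.le_level]

theorem half_le_level_add (hφ : |φ| ≤ 1) : r / 2 ≤ modelLevel B r + φ := by
  linarith [h.four_le, h.le_level, neg_le_of_abs_le hφ]

theorem level_mem_image : modelLevel B r ∈ logTail f '' Set.Ioi s₀ :=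
  h.mem_image _ (by linarith [h.four_le, h.le_level])

theorem abs_defectGap_le : |defectGap f s₀ B r| ≤ 2 * ε / r := by
  have hmul := h.abs_mul_defectGap_le
  rw [abs_mul, abs_of_pos h.level_pos] at hmul
  rw [le_div_iff₀ h.pos]
  nlinarith [h.four_le, h.le_level, abs_nonneg (defectGap f s₀ B r)]

theorem abs_defectGapDeriv_le : |defectGapDeriv f s₀ B r| ≤ 4 * ε / r ^ 2 := by
  have hr := h.pos
  have hY := h.level_pos
  have hone : 1 / r ≤ 1 := (div_le_one hr).2 (by linarith [h.four_le])
  have hweight : (1 - 1 / r) / modelLevel B r ^ 2 ≤ 4 / r ^ 2 := by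
    rw [div_le_div_iff₀ (by positivity) (by positivity)]
    have hsq : r ^ 2 ≤ 4 * modelLevel B r ^ 2 := by nlinarith [h.le_level]
    nlinarith [one_div_pos.2 hr]
  rw [defectGapDeriv, abs_mul, abs_neg,
    abs_of_nonneg (div_nonneg (sub_nonneg.2 hone) (sq_nonneg _))]
  calc (1 - 1 / r) / modelLevel B r ^ 2 * _ ≤ 4 / r ^ 2 * ε :=
        mul_le_mul hweight h.abs_invB2_sub_le (abs_nonneg _) (by positivity)
    _ = 4 * ε / r ^ 2 := by ring

theorem sq_div_le : (r - 1) ^ 2 / r ≤ r := by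
  rw [div_le_iff₀ h.pos]
  nlinarith [h.four_le]

theorem abs_coeffCorrection_le (hB : 0 ≤ B) : |coeffCorrection f s₀ B r| ≤ 2 * B * ε := by
  have hr := h.pos
  rw [coeffCorrection, abs_mul, abs_of_nonneg (by positivity)]
  calc B * ((r - 1) ^ 2 / r) * |defectGap f s₀ B r| ≤ B * r * (2 * ε / r) :=
        mul_le_mul (mul_le_mul_of_nonneg_left h.sq_div_le hB) h.abs_defectGap_le
          (abs_nonneg _) (by positivity)
    _ = 2 * B * ε := by field_simp

theorem abs_coeffCorrectionDeriv_le (hB : 0 ≤ B) :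
    |coeffCorrectionDeriv f s₀ B r| ≤ 6 * B * ε / r := by
  have hr := h.pos
  have hinv : 1 / r ^ 2 ≤ 1 := (div_le_one (by positivity)).2 (by nlinarith [h.four_le])
  have hfactor : |B * (1 - 1 / r ^ 2)| ≤ B := by
    rw [abs_of_nonneg (mul_nonneg hB (sub_nonneg.2 hinv))]
    exact mul_le_of_le_one_right hB (sub_le_self _ (by positivity))
  have hfactor' : |B * ((r - 1) ^ 2 / r)| ≤ B * r := by
    rw [abs_of_nonneg (by positivity)]
    exact mul_le_mul_of_nonneg_left h.sq_div_le hB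
  refine (abs_add_le _ _).trans ?_
  rw [abs_mul (B * (1 - 1 / r ^ 2)), abs_mul (B * ((r - 1) ^ 2 / r))]
  calc _ ≤ B * (2 * ε / r) + B * r * (4 * ε / r ^ 2) :=
        add_le_add (mul_le_mul hfactor h.abs_defectGap_le (abs_nonneg _) hB)
          (mul_le_mul hfactor' h.abs_defectGapDeriv_le (abs_nonneg _) (by positivity))
    _ = 6 * B * ε / r := by
        field_simp
        ring

end

section

variable (hf : IsTailRegular f s₀) (hB : 1 ≤ B) (h : IsLevelControlled f s₀ B ε r)

include hf hB h

theorem hasDerivAt_defectGap : HasDerivAt (defectGap f s₀ B) (defectGapDeriv f s₀ B r) r := by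
  have hr := h.pos
  have hY := h.level_pos
  have hr1 : r - 1 ≠ 0 := by linarith [h.four_le]
  refine (((hf.hasDerivAt_tailDefect h.level_mem_image hY.ne').comp r
    (hasDerivAt_modelLevel hB hr)).sub
      (hasDerivAt_modelDefect hB (by linarith [h.four_le]))).congr_deriv ?_
  rw [defectGapDeriv]
  field_simp
  ring

theorem hasDerivAt_coeffCorrection :
    HasDerivAt (coeffCorrection f s₀ B) (coeffCorrectionDeriv f s₀ B r) r := by
  have hr := h.pos.ne'
  refine ((((((hasDerivAt_id' r).sub_const 1).fun_pow 2).fun_div (hasDerivAt_id' r)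
    hr).const_mul B).fun_mul (h.hasDerivAt_defectGap hf hB)).congr_deriv ?_
  rw [coeffCorrectionDeriv]
  field_simp
  ring

theorem continuousAt_coeffCorrectionDeriv :
    ContinuousAt (coeffCorrectionDeriv f s₀ B) r := by
  have hr := h.pos.ne'
  have hr1 : r - 1 ≠ 0 := by linarith [h.four_le]
  have hY : ContinuousAt (modelLevel B) r := (hasDerivAt_modelLevel hB h.pos).continuousAt
  have hinv : ContinuousAt (fun r => invB2 f (Fint f) (tailInv f s₀ (modelLevel B r))) r :=
    ContinuousAt.comp (g := fun y => invB2 f (Fint f) (tailInv f s₀ y))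
      (hf.continuousAt_invB2_tailInv h.level_mem_image) hY
  have hgap := (h.hasDerivAt_defectGap hf hB).continuousAt
  have hr2 : r ^ 2 ≠ 0 := pow_ne_zero 2 hr
  have hr13 : (r - 1) ^ 3 ≠ 0 := pow_ne_zero 3 hr1
  have hBr : B * (r - 1) ^ 2 ≠ 0 := mul_ne_zero (by linarith) (pow_ne_zero 2 hr1)
  have hY2 : modelLevel B r ^ 2 ≠ 0 := pow_ne_zero 2 h.level_pos.ne'
  have hB0 : B ≠ 0 := by linarith
  unfold coeffCorrectionDeriv defectGapDeriv modelDefectDeriv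
  fun_prop (disch := assumption)

end

theorem tailDefect_mul_sq (hB : 1 ≤ B) (h : IsLevelControlled f s₀ B ε r) :
    tailDefect f s₀ (modelLevel B r + 0) * (1 - 1 / r) ^ 2 =
      1 / r ^ 2 + (1 + coeffCorrection f s₀ B r) / (B * r) := by
  have hr := h.pos.ne'
  have hr1 : r - 1 ≠ 0 := by linarith [h.four_le]
  have hdefect : tailDefect f s₀ (modelLevel B r) = defectGap f s₀ B r + modelDefect B r := by
    rw [defectGap, sub_add_cancel]
  rw [add_zero, hdefect, coeffCorrection, modelDefect]
  field_simp
  ring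

theorem continuousAt_tailDefect (hf : IsTailRegular f s₀) (h : IsLevelControlled f s₀ B ε r)
    (hφ : |φ| ≤ 1) : ContinuousAt (tailDefect f s₀) (modelLevel B r + φ) := by
  have hle := h.half_le_level_add hφ
  exact (hf.hasDerivAt_tailDefect (h.mem_image _ hle) (by linarith [h.pos])).continuousAt

theorem abs_tailDefect_sub_le (hf : IsTailRegular f s₀) (h : IsLevelControlled f s₀ B ε r)
    (hφ : |φ| ≤ 1) (hφ' : |φ'| ≤ 1) :
    |tailDefect f s₀ (modelLevel B r + φ) - tailDefect f s₀ (modelLevel B r + φ')| ≤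
      8 / r ^ 2 * |φ - φ'| := by
  have hr := h.pos
  have hderiv (y : ℝ) (hy : r / 2 ≤ y) : HasDerivWithinAt (tailDefect f s₀)
      (-(invB2 f (Fint f) (tailInv f s₀ y) / y ^ 2)) (Set.Ici (r / 2)) y :=
    (hf.hasDerivAt_tailDefect (h.mem_image y hy) (by linarith)).hasDerivWithinAt
  have hbound (y : ℝ) (hy : r / 2 ≤ y) :
      ‖-(invB2 f (Fint f) (tailInv f s₀ y) / y ^ 2)‖ ≤ 8 / r ^ 2 := by
    have hy0 : 0 < y := by linarith
    rw [norm_neg, norm_div, Real.norm_eq_abs, Real.norm_of_nonneg (sq_nonneg y),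
      div_le_div_iff₀ (by positivity) (by positivity)]
    nlinarith [h.abs_invB2_le y hy, sq_nonneg r]
  have hmean := (convex_Ici (r / 2)).norm_image_sub_le_of_norm_hasDerivWithin_le hderiv hbound
    (h.half_le_level_add hφ') (h.half_le_level_add hφ)
  rwa [add_sub_add_left_eq_sub] at hmean

end IsLevelControlled

end CoefficientCorrection

namespace IsTailRegular

variable {f e : ℝ → ℝ} {s₀ B r₁ : ℝ} (hf : IsTailRegular f s₀) (hB : 1 ≤ B)
  (hB₂ : Tendsto (invB2 f (Fint f)) atTop (nhds (1 / B)))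
  (hgap₁ : ∀ r, r₁ ≤ r → |modelLevel B r * defectGap f s₀ B r| ≤ e r)
  (hgap₂ : ∀ r, r₁ ≤ r → |invB2 f (Fint f) (tailInv f s₀ (modelLevel B r)) +
    r / (r - 1) * modelLevel B r ^ 2 * modelDefectDeriv B r| ≤ e r)

include hf hB hB₂

theorem tendsto_mul_tailDefect_modelLevel
    (hlim : Tendsto (fun s => deriv f s * Fint f s) atTop (nhds 1)) :
    Tendsto (fun r => r * tailDefect f s₀ (modelLevel B r)) atTop (nhds (1 / B)) := by
  have hquot := ((hf.tendsto_mul_tailDefect hlim hB₂).comp (tendsto_modelLevel hB)).div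
    (tendsto_modelLevel_div hB) one_ne_zero
  rw [div_one] at hquot
  refine hquot.congr' ?_
  filter_upwards [eventually_gt_atTop 0, (tendsto_modelLevel hB).eventually_gt_atTop 0]
    with r hr hY
  simp only [Function.comp_apply, Pi.div_apply]
  field_simp

include hgap₁ hgap₂

theorem eventually_isLevelControlled :
    ∀ᶠ r in atTop, IsLevelControlled f s₀ B (e r) r := by
  have hlevel := (tendsto_modelLevel_div hB).eventually_const_lt
    (show (3 / 4 : ℝ) < 1 by norm_num)
  have hB' : |1 / B| < 2 := by
    rw [abs_of_pos (by positivity)]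
    linarith [(div_le_one (by linarith)).2 hB]
  have hhalf : Tendsto (fun r : ℝ => r / 2) atTop atTop :=
    tendsto_id.atTop_div_const two_pos
  have himage := hhalf.eventually (eventually_forall_ge_atTop.2 hf.eventually_mem_image_logTail)
  have hinv := hhalf.eventually (eventually_forall_ge_atTop.2
    ((hf.tendsto_invB2_tailInv hB₂).abs.eventually_lt_const hB'))
  filter_upwards [eventually_ge_atTop 4, eventually_ge_atTop r₁, hlevel, himage, hinv]
    with r h4 hr₁ hlevel himage hinv
  exact ⟨h4, ((lt_div_iff₀ (by linarith)).1 hlevel).le, himage, fun y hy => (hinv y hy).le,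
    hgap₁ r hr₁, hgap₂ r hr₁⟩

theorem eventually_abs_mul_tailDefect_sub_le
    (hlim : Tendsto (fun s => deriv f s * Fint f s) atTop (nhds 1)) :
    ∀ᶠ r in atTop, ∀ φ, |φ| ≤ 1 →
      |r * tailDefect f s₀ (modelLevel B r + φ) - 1 / B| ≤ 1 / 512 := by
  have hnear := ((tendsto_iff_dist_tendsto_zero.1
    (hf.tendsto_mul_tailDefect_modelLevel hB hB₂ hlim)).eventually_lt_const
      (show (0 : ℝ) < 1 / 1024 by norm_num))
  filter_upwards [hnear, hf.eventually_isLevelControlled hB hB₂ hgap₁ hgap₂,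
    eventually_ge_atTop 8192] with r hnear h hr φ hφ
  have hlip : r * |tailDefect f s₀ (modelLevel B r + φ) - tailDefect f s₀ (modelLevel B r)|
      ≤ 1 / 1024 := by
    have hsub := h.abs_tailDefect_sub_le hf hφ (φ' := 0) (by norm_num)
    rw [add_zero, sub_zero] at hsub
    calc _ ≤ r * (8 / r ^ 2 * 1) := by
          refine mul_le_mul_of_nonneg_left (hsub.trans ?_) h.pos.le
          exact mul_le_mul_of_nonneg_left hφ (by positivity)
      _ = 8 / r := by field_simp
      _ ≤ 1 / 1024 := by
          rw [div_le_div_iff₀ h.pos (by norm_num)]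
          linarith
  rw [← abs_of_pos h.pos, ← abs_mul, abs_of_pos h.pos] at hlip
  rw [Real.dist_eq] at hnear
  calc |r * tailDefect f s₀ (modelLevel B r + φ) - 1 / B|
      = |r * (tailDefect f s₀ (modelLevel B r + φ) - tailDefect f s₀ (modelLevel B r)) +
          (r * tailDefect f s₀ (modelLevel B r) - 1 / B)| := by ring_nf
    _ ≤ 1 / 1024 + 1 / 1024 := (abs_add_le _ _).trans (add_le_add hlip hnear.le)
    _ = 1 / 512 := by norm_num

theorem eventually_isDeviationProblem
    (hlim : Tendsto (fun s => deriv f s * Fint f s) atTop (nhds 1))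
    (he : AntitoneOn e (Set.Ici r₁)) (hsmall : Tendsto (fun r => √r * e r) atTop (nhds 0)) :
    ∀ᶠ r₀ in atTop, IsDeviationProblem B r₀ (fun r φ => tailDefect f s₀ (modelLevel B r + φ))
      (coeffCorrection f s₀ B) (coeffCorrectionDeriv f s₀ B) e := by
  have hsqrt : ∀ᶠ r : ℝ in atTop, 2048 * √(B * r) ≤ r := by
    filter_upwards [eventually_ge_atTop (2048 ^ 2 * B), eventually_gt_atTop 0] with r hr hr0
    rw [← le_div_iff₀' (by norm_num), Real.sqrt_le_left (by positivity)]
    nlinarith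
  have herror : ∀ᶠ r in atTop, 16384 * B * e r * √(B * r) ≤ 1 := by
    have hlim := hsmall.const_mul (16384 * B * √B)
    rw [mul_zero] at hlim
    filter_upwards [hlim.eventually_lt_const one_pos] with r hr
    rw [Real.sqrt_mul (by linarith)]
    linarith
  have hcontrol := hf.eventually_isLevelControlled hB hB₂ hgap₁ hgap₂
  filter_upwards [eventually_ge_atTop r₁, eventually_forall_ge_atTop.2 hsqrt,
    eventually_forall_ge_atTop.2 herror, eventually_forall_ge_atTop.2 hcontrol,
    eventually_forall_ge_atTop.2
      (hf.eventually_abs_mul_tailDefect_sub_le hB hB₂ hgap₁ hgap₂ hlim)]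
    with r₀ hr₁ hsqrt herror h hnear
  exact {
    one_le := hB
    pos := (h r₀ le_rfl).pos
    continuousOn_coeff := fun p hp => ContinuousAt.continuousWithinAt <|
      ContinuousAt.comp (g := tailDefect f s₀)
        ((h p.1 hp.1).continuousAt_tailDefect hf (abs_le.2 hp.2))
        (((hasDerivAt_modelLevel hB (h p.1 hp.1).pos).continuousAt.comp
          continuousAt_fst).add continuousAt_snd)
    continuousOn_deriv := fun r hr =>
      ((h r hr).continuousAt_coeffCorrectionDeriv hf hB).continuousWithinAt
    hasDerivAt := fun r hr => (h r hr).hasDerivAt_coeffCorrection hf hB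
    coeff_near := hnear
    coeff_lipschitz := fun r hr φ φ' hφ hφ' => (h r hr).abs_tailDefect_sub_le hf hφ hφ'
    coeff_zero := fun r hr => (h r hr).tailDefect_mul_sq hB
    antitone := he.mono (Set.Ici_subset_Ici.2 hr₁)
    abs_correction_le := fun r hr => (h r hr).abs_coeffCorrection_le (by linarith)
    abs_deriv_le := fun r hr => (h r hr).abs_coeffCorrectionDeriv_le (by linarith)
    sqrt_le := hsqrt
    error_le := herror }

end IsTailRegular

section RunningSupremum

variable {w R : ℝ → ℝ}

theorem eventually_nhdsGT_forall_Ioc {p : ℝ → Prop} (h : ∀ᶠ t in nhdsWithin 0 (Set.Ioi 0), p t) :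
    ∀ᶠ t in nhdsWithin (0 : ℝ) (Set.Ioi 0), ∀ s ∈ Set.Ioc 0 t, p s := by
  obtain ⟨δ, hδ, hp⟩ := (nhdsGT_basis (0 : ℝ)).eventually_iff.1 h
  filter_upwards [Ioo_mem_nhdsGT hδ] with t ht s hs using hp ⟨hs.1, hs.2.trans_lt ht.2⟩

theorem eventually_forall_Ioc_le_div (hanti : AntitoneOn w (Set.Ioi 0))
    (hpos : ∀ᶠ t in nhdsWithin 0 (Set.Ioi 0), 0 < w t) (hR : ∀ t, 0 ≤ R t)
    (h : Tendsto (fun t => w t * R t) (nhdsWithin 0 (Set.Ioi 0)) (nhds 0)) {ε : ℝ} (hε : 0 < ε) :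
    ∀ᶠ t in nhdsWithin 0 (Set.Ioi 0), ∀ s ∈ Set.Ioc 0 t, R s ≤ ε / w t := by
  filter_upwards [eventually_nhdsGT_forall_Ioc (h.eventually_lt_const hε), hpos,
    self_mem_nhdsWithin] with t hsmall hw ht s hs
  rw [le_div_iff₀ hw, mul_comm]
  exact (mul_le_mul_of_nonneg_right (hanti hs.1 ht hs.2) (hR s)).trans (hsmall s hs).le

theorem eventually_bddAbove_image_Ioc (hanti : AntitoneOn w (Set.Ioi 0))
    (hpos : ∀ᶠ t in nhdsWithin 0 (Set.Ioi 0), 0 < w t) (hR : ∀ t, 0 ≤ R t)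
    (h : Tendsto (fun t => w t * R t) (nhdsWithin 0 (Set.Ioi 0)) (nhds 0)) :
    ∀ᶠ t in nhdsWithin 0 (Set.Ioi 0), BddAbove (R '' Set.Ioc 0 t) := by
  filter_upwards [eventually_forall_Ioc_le_div hanti hpos hR h one_pos] with t ht
  exact ⟨1 / w t, Set.forall_mem_image.2 ht⟩

theorem tendsto_mul_sSup_image_Ioc (hanti : AntitoneOn w (Set.Ioi 0))
    (hpos : ∀ᶠ t in nhdsWithin 0 (Set.Ioi 0), 0 < w t) (hR : ∀ t, 0 ≤ R t)
    (h : Tendsto (fun t => w t * R t) (nhdsWithin 0 (Set.Ioi 0)) (nhds 0)) :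
    Tendsto (fun t => w t * sSup (R '' Set.Ioc 0 t)) (nhdsWithin 0 (Set.Ioi 0)) (nhds 0) := by
  have hsup (t : ℝ) : 0 ≤ sSup (R '' Set.Ioc 0 t) :=
    Real.sSup_nonneg (Set.forall_mem_image.2 fun s _ => hR s)
  refine tendsto_order.2 ⟨fun a ha => ?_, fun a ha => ?_⟩
  · filter_upwards [hpos] with t ht using ha.trans_le (mul_nonneg ht.le (hsup t))
  · filter_upwards [eventually_forall_Ioc_le_div hanti hpos hR h (half_pos ha), hpos]
      with t hle hw
    have hmul : w t * sSup (R '' Set.Ioc 0 t) ≤ a / 2 := by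
      rw [← le_div_iff₀' hw]
      exact Real.sSup_le (Set.forall_mem_image.2 hle) (by positivity)
    linarith

end RunningSupremum

section EmdenFowlerTime

variable {R : ℝ → ℝ} {r : ℝ}

/-- The radius `t = e^{(1 - r) / 2}` corresponding to the Emden–Fowler variable
`r = 1 - 2 log t`. -/
noncomputable def emdenFowlerRadius (r : ℝ) : ℝ := Real.exp ((1 - r) / 2)

theorem emdenFowlerRadius_pos (r : ℝ) : 0 < emdenFowlerRadius r := Real.exp_pos _

theorem one_sub_two_mul_log_emdenFowlerRadius (r : ℝ) :
    1 - 2 * Real.log (emdenFowlerRadius r) = r := by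
  rw [emdenFowlerRadius, Real.log_exp]
  ring

theorem strictAnti_emdenFowlerRadius : StrictAnti emdenFowlerRadius := fun _ _ h =>
  Real.exp_lt_exp.2 (by linarith)

theorem tendsto_emdenFowlerRadius :
    Tendsto emdenFowlerRadius atTop (nhdsWithin 0 (Set.Ioi 0)) := by
  refine tendsto_nhdsWithin_iff.2 ⟨Real.tendsto_exp_atBot.comp ?_,
    Eventually.of_forall emdenFowlerRadius_pos⟩
  exact (tendsto_atBot_add_const_left atTop 1 tendsto_neg_atTop_atBot).atBot_div_const two_pos

theorem antitoneOn_sqrt_neg_log : AntitoneOn (fun t => √(-Real.log t)) (Set.Ioi 0) :=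
  fun _ hs _ _ hst => Real.sqrt_le_sqrt (neg_le_neg (Real.log_le_log hs hst))

theorem eventually_sqrt_neg_log_pos : ∀ᶠ t in nhdsWithin 0 (Set.Ioi 0), 0 < √(-Real.log t) := by
  filter_upwards [Ioo_mem_nhdsGT one_pos] with t ht
  exact Real.sqrt_pos.2 (neg_pos.2 (Real.log_neg ht.1 ht.2))

variable (hR : ∀ t, 0 ≤ R t)
  (h : Tendsto (fun t => √(-Real.log t) * R t) (nhdsWithin 0 (Set.Ioi 0)) (nhds 0))

include hR h

theorem exists_antitoneOn_sSup_emdenFowlerRadius :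
    ∃ r₁, (∀ r, r₁ ≤ r → R (emdenFowlerRadius r) ≤
        sSup (R '' Set.Ioc 0 (emdenFowlerRadius r))) ∧
      AntitoneOn (fun r => sSup (R '' Set.Ioc 0 (emdenFowlerRadius r))) (Set.Ici r₁) := by
  have hmem (r : ℝ) : R (emdenFowlerRadius r) ∈ R '' Set.Ioc 0 (emdenFowlerRadius r) :=
    ⟨_, ⟨emdenFowlerRadius_pos r, le_rfl⟩, rfl⟩
  obtain ⟨r₁, hbdd⟩ := eventually_atTop.1 (tendsto_emdenFowlerRadius.eventually
    (eventually_bddAbove_image_Ioc antitoneOn_sqrt_neg_log eventually_sqrt_neg_log_pos hR h))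
  exact ⟨r₁, fun r hr => le_csSup (hbdd r hr) (hmem r), fun a ha b _ hab =>
    csSup_le_csSup (hbdd a ha) ⟨_, hmem b⟩
      (Set.image_mono (Set.Ioc_subset_Ioc_right (strictAnti_emdenFowlerRadius.antitone hab)))⟩

theorem tendsto_sqrt_mul_sSup_emdenFowlerRadius :
    Tendsto (fun r => √r * sSup (R '' Set.Ioc 0 (emdenFowlerRadius r))) atTop (nhds 0) := by
  have hsup := ((tendsto_mul_sSup_image_Ioc antitoneOn_sqrt_neg_log eventually_sqrt_neg_log_pos
    hR h).comp tendsto_emdenFowlerRadius).const_mul 2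
  rw [mul_zero] at hsup
  have hnonneg (r : ℝ) : 0 ≤ sSup (R '' Set.Ioc 0 (emdenFowlerRadius r)) :=
    Real.sSup_nonneg (Set.forall_mem_image.2 fun s _ => hR s)
  refine squeeze_zero' (Eventually.of_forall fun r => mul_nonneg (Real.sqrt_nonneg r) (hnonneg r))
    ?_ hsup
  filter_upwards [eventually_ge_atTop 2] with r hr
  have hlog : -Real.log (emdenFowlerRadius r) = (r - 1) / 2 := by
    linarith [one_sub_two_mul_log_emdenFowlerRadius r]
  have hsqrt : √r ≤ 2 * √((r - 1) / 2) := by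
    rw [Real.sqrt_le_left (by positivity), mul_pow, Real.sq_sqrt (by linarith)]
    linarith
  rw [Function.comp_apply, hlog, ← mul_assoc]
  exact mul_le_mul_of_nonneg_right hsqrt (hnonneg r)

end EmdenFowlerTime

namespace IsTailRegular

section TailInverse

variable {f : ℝ → ℝ} {s₀ y δ : ℝ} (hf : IsTailRegular f s₀)

include hf

theorem monotoneOn_tailInv {a : ℝ} (hdom : ∀ x, a ≤ x → x ∈ logTail f '' Set.Ioi s₀) :
    MonotoneOn (tailInv f s₀) (Set.Ici a) := by
  have hderiv (x : ℝ) (hx : x ∈ Set.Ici a) := hf.hasDerivAt_tailInv (hdom x hx)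
  refine monotoneOn_of_deriv_nonneg (convex_Ici a)
    (fun x hx => (hderiv x hx).continuousAt.continuousWithinAt)
    (fun x hx => (hderiv x (interior_subset hx)).differentiableAt.differentiableWithinAt)
    fun x hx => ?_
  rw [(hderiv x (interior_subset hx)).deriv]
  exact (hf.tailAmplitude_pos (hdom x (interior_subset hx))).le

theorem antitoneOn_tailAmplitude {a : ℝ} (hdom : ∀ x, a ≤ x → x ∈ logTail f '' Set.Ioi s₀)
    (hdefect : ∀ x, a ≤ x → 0 ≤ tailDefect f s₀ x) :
    AntitoneOn (tailAmplitude f s₀) (Set.Ici a) := by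
  have hderiv (x : ℝ) (hx : x ∈ Set.Ici a) := hf.hasDerivAt_tailAmplitude (hdom x hx)
  refine antitoneOn_of_deriv_nonpos (convex_Ici a)
    (fun x hx => (hderiv x hx).continuousAt.continuousWithinAt)
    (fun x hx => (hderiv x (interior_subset hx)).differentiableAt.differentiableWithinAt)
    fun x hx => ?_
  have hax : a ≤ x := interior_subset hx
  rw [(hderiv x hax).deriv]
  exact neg_nonpos.2 (mul_nonneg (hf.tailAmplitude_pos (hdom x hax)).le (hdefect x hax))

theorem tailAmplitude_le_of_mem_Icc
    (hdom : ∀ x, y - 1 ≤ x → x ∈ logTail f '' Set.Ioi s₀)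
    (hdefect : ∀ x, y ≤ x → 0 ≤ tailDefect f s₀ x) {x : ℝ} (hx : x ∈ Set.Icc (y - 1) (y + 1)) :
    tailAmplitude f s₀ x ≤ Real.exp 1 * tailAmplitude f s₀ y := by
  have hle : y - 1 ≤ y := sub_le_self y zero_le_one
  have hy := hdom y hle
  rcases le_total x y with hxy | hyx
  · have hmono : f (tailInv f s₀ x) ≤ f (tailInv f s₀ y) :=
      (strictMonoOn_of_hasDerivAt_pos (fun _ => hf.hasDerivAt) hf.deriv_pos).monotoneOn
        (lt_tailInv (hdom x hx.1)) (lt_tailInv hy) (hf.monotoneOn_tailInv hdom hx.1 hle hxy)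
    have hexp : Real.exp (-x) ≤ Real.exp 1 * Real.exp (-y) := by
      rw [← Real.exp_add]
      exact Real.exp_le_exp.2 (by linarith [hx.1])
    rw [tailAmplitude, tailAmplitude, hf.Fint_tailInv (hdom x hx.1), hf.Fint_tailInv hy,
      mul_left_comm]
    exact mul_le_mul hmono hexp (Real.exp_pos _).le (hf.pos _ (lt_tailInv hy)).le
  · exact (hf.antitoneOn_tailAmplitude (fun z hz => hdom z (hle.trans hz)) hdefect
      Set.self_mem_Ici hyx hyx).trans
        (le_mul_of_one_le_left (hf.tailAmplitude_pos hy).le (Real.one_le_exp zero_le_one))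

theorem abs_tailInv_add_sub_le
    (hdom : ∀ x, y - 1 ≤ x → x ∈ logTail f '' Set.Ioi s₀)
    (hdefect : ∀ x, y ≤ x → 0 ≤ tailDefect f s₀ x) (hδ : |δ| ≤ 1) :
    |tailInv f s₀ (y + δ) - tailInv f s₀ y| ≤ Real.exp 1 * tailAmplitude f s₀ y * |δ| := by
  have hmean := (convex_Icc (y - 1) (y + 1)).norm_image_sub_le_of_norm_hasDerivWithin_le
    (fun x hx => (hf.hasDerivAt_tailInv (hdom x hx.1)).hasDerivWithinAt)
    (fun x hx => (Real.norm_of_nonneg (hf.tailAmplitude_pos (hdom x hx.1)).le).trans_le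
      (hf.tailAmplitude_le_of_mem_Icc hdom hdefect hx))
    (show y ∈ Set.Icc (y - 1) (y + 1) by constructor <;> linarith)
    (show y + δ ∈ Set.Icc (y - 1) (y + 1) by
      constructor <;> linarith [neg_le_of_abs_le hδ, le_of_abs_le hδ])
  rwa [add_sub_cancel_left] at hmean

end TailInverse

end IsTailRegular

/-- `(U, P)` solves the first-order system of the Emden–Fowler equation
`U'' + f(U) e^{1 - r} / 4 = 0` on `I`; under `r = 1 - 2 log t` this is the radial equation
`u'' + u' / t + f(u) = 0`. -/
def IsEmdenFowlerSolution (f U P : ℝ → ℝ) (I : Set ℝ) : Prop :=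
  ∀ r ∈ I, HasDerivAt U (P r) r ∧ HasDerivAt P (-(f (U r) * Real.exp (1 - r) / 4)) r

/-- The profile `S(Y(r) + φ(r))` obtained by shifting the model level by the deviation `φ`. -/
noncomputable def deviationProfile (f : ℝ → ℝ) (s₀ B : ℝ) (φ : ℝ → ℝ) (r : ℝ) : ℝ :=
  tailInv f s₀ (modelLevel B r + φ r)

/-- The derivative of `deviationProfile f s₀ B φ` when `φ' = ψ`. -/
noncomputable def deviationProfileDeriv (f : ℝ → ℝ) (s₀ B : ℝ) (φ ψ : ℝ → ℝ) (r : ℝ) : ℝ :=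
  tailAmplitude f s₀ (modelLevel B r + φ r) * (1 - 1 / r + ψ r)

namespace IsTailRegular

section DeviationProfile

variable {f φ ψ : ℝ → ℝ} {s₀ B r : ℝ}

theorem hasDerivAt_deviationProfile (hf : IsTailRegular f s₀) (hB : 1 ≤ B) (hr : 0 < r)
    (hy : modelLevel B r + φ r ∈ logTail f '' Set.Ioi s₀) (hφ : HasDerivAt φ (ψ r) r) :
    HasDerivAt (deviationProfile f s₀ B φ) (deviationProfileDeriv f s₀ B φ ψ r) r :=
  (hf.hasDerivAt_tailInv hy).comp r ((hasDerivAt_modelLevel hB hr).fun_add hφ)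

theorem mul_exp_one_sub_eq_tailAmplitude_mul (hf : IsTailRegular f s₀) (hB : 1 ≤ B) (hr : 0 < r)
    (hy : modelLevel B r + φ r ∈ logTail f '' Set.Ioi s₀) :
    f (deviationProfile f s₀ B φ r) * Real.exp (1 - r) / 4 =
      tailAmplitude f s₀ (modelLevel B r + φ r) * Real.exp (φ r) / (B * r) := by
  have hB0 : B ≠ 0 := by linarith
  have hexp : Real.exp (-(modelLevel B r + φ r)) * Real.exp (φ r) =
      B * r / 4 * Real.exp (1 - r) := by
    rw [← exp_neg_modelLevel hB hr, ← Real.exp_add]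
    ring_nf
  rw [tailAmplitude, hf.Fint_tailInv hy, mul_assoc, hexp, deviationProfile]
  field_simp

theorem hasDerivAt_deviationProfileDeriv (hf : IsTailRegular f s₀) (hB : 1 ≤ B) (hr : 0 < r)
    (hy : modelLevel B r + φ r ∈ logTail f '' Set.Ioi s₀) (hφ : HasDerivAt φ (ψ r) r)
    (hψ : HasDerivAt ψ (deviationForce B (fun r φ => tailDefect f s₀ (modelLevel B r + φ)) r
      (φ r) (ψ r)) r) :
    HasDerivAt (deviationProfileDeriv f s₀ B φ ψ)
      (-(f (deviationProfile f s₀ B φ r) * Real.exp (1 - r) / 4)) r := by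
  have hslope : HasDerivAt (fun r : ℝ => 1 - 1 / r) (1 / r ^ 2) r := by
    simpa only [one_div, neg_neg] using (hasDerivAt_inv hr.ne').const_sub 1
  refine (((hf.hasDerivAt_tailAmplitude hy).comp r
    ((hasDerivAt_modelLevel hB hr).fun_add hφ)).fun_mul (hslope.fun_add hψ)).congr_deriv ?_
  rw [hf.mul_exp_one_sub_eq_tailAmplitude_mul hB hr hy, deviationForce, Function.comp_apply]
  ring

end DeviationProfile

section ModelComparison

variable {f ut : ℝ → ℝ} {s₀ B t₁ r : ℝ} (hf : IsTailRegular f s₀) (hB : 1 ≤ B)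
  (hut : ∀ t ∈ Set.Ioo (0 : ℝ) t₁, s₀ < ut t ∧ Fint f (ut t) = modelG B (modelv B t))

include hf hB hut

theorem tailInv_modelLevel (hr : 1 < r) (hrt : emdenFowlerRadius r < t₁) :
    tailInv f s₀ (modelLevel B r) = ut (emdenFowlerRadius r) := by
  obtain ⟨hlt, hF⟩ := hut _ ⟨emdenFowlerRadius_pos r, hrt⟩
  refine hf.tailInv_eq_of_Fint_eq hlt ?_
  rw [hF, modelv_eq_modelpsi, one_sub_two_mul_log_emdenFowlerRadius, modelG_modelpsi hB hr]

theorem abs_mul_defectGap_eq_R1 (hr : 1 < r) (hrt : emdenFowlerRadius r < t₁)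
    (hy : modelLevel B r ∈ logTail f '' Set.Ioi s₀) :
    |modelLevel B r * defectGap f s₀ B r| = R1 f ut B (emdenFowlerRadius r) := by
  rw [R1, modelv_eq_modelpsi, one_sub_two_mul_log_emdenFowlerRadius, invB1_modelg_modelpsi hB hr,
    ← hf.tailInv_modelLevel hB hut hr hrt, ← hf.mul_tailDefect hy, ← mul_sub, defectGap]

theorem abs_invB2_add_eq_R2 (hr : 3 < r) (hrt : emdenFowlerRadius r < t₁) :
    |invB2 f (Fint f) (tailInv f s₀ (modelLevel B r)) +
      r / (r - 1) * modelLevel B r ^ 2 * modelDefectDeriv B r| =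
      R2 f ut B (emdenFowlerRadius r) := by
  rw [R2, modelv_eq_modelpsi, one_sub_two_mul_log_emdenFowlerRadius, invB2_modelg_modelpsi hB hr,
    ← hf.tailInv_modelLevel hB hut (by linarith) hrt, sub_neg_eq_add]

omit hut in
theorem eventually_tailInv_domain
    (hlim : Tendsto (fun s => deriv f s * Fint f s) atTop (nhds 1))
    (hB₂ : Tendsto (invB2 f (Fint f)) atTop (nhds (1 / B))) :
    ∀ᶠ r in atTop, ∀ y, modelLevel B r - 1 ≤ y →
      y ∈ logTail f '' Set.Ioi s₀ ∧ 0 ≤ tailDefect f s₀ y := by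
  have hdefect : ∀ᶠ y in atTop, 0 ≤ tailDefect f s₀ y := by
    filter_upwards [(hf.tendsto_mul_tailDefect hlim hB₂).eventually_const_lt
      (show 0 < 1 / B by positivity), eventually_gt_atTop 0] with y hmul hy
    exact (pos_of_mul_pos_right hmul hy.le).le
  exact ((tendsto_modelLevel hB).atTop_add tendsto_const_nhds).eventually
    (eventually_forall_ge_atTop.2 (hf.eventually_mem_image_logTail.and hdefect))

theorem eventually_isDeviationProblem_sSup
    (hlim : Tendsto (fun s => deriv f s * Fint f s) atTop (nhds 1))
    (hB₂ : Tendsto (invB2 f (Fint f)) atTop (nhds (1 / B))) (ht₁ : 0 < t₁)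
    (hR : Tendsto (fun t => √(-Real.log t) * (R1 f ut B t + R2 f ut B t))
      (nhdsWithin 0 (Set.Ioi 0)) (nhds 0)) :
    ∀ᶠ r₀ in atTop, IsDeviationProblem B r₀ (fun r φ => tailDefect f s₀ (modelLevel B r + φ))
      (coeffCorrection f s₀ B) (coeffCorrectionDeriv f s₀ B)
      (fun r =>
        sSup ((fun s => R1 f ut B s + R2 f ut B s) '' Set.Ioc 0 (emdenFowlerRadius r))) := by
  have hR1 (t : ℝ) : 0 ≤ R1 f ut B t := abs_nonneg _
  have hR2 (t : ℝ) : 0 ≤ R2 f ut B t := abs_nonneg _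
  have hR0 (t : ℝ) : 0 ≤ R1 f ut B t + R2 f ut B t := add_nonneg (hR1 t) (hR2 t)
  obtain ⟨r₁, hle, hanti⟩ := exists_antitoneOn_sSup_emdenFowlerRadius hR0 hR
  obtain ⟨r₂, hr₂⟩ := eventually_atTop.1 <| ((((tendsto_emdenFowlerRadius.mono_right
    nhdsWithin_le_nhds).eventually_lt_const ht₁).and (eventually_gt_atTop 3)).and
      ((tendsto_modelLevel hB).eventually hf.eventually_mem_image_logTail)).and
        (eventually_ge_atTop r₁)
  refine hf.eventually_isDeviationProblem hB hB₂ (r₁ := r₂) (fun r hr => ?_) (fun r hr => ?_) hlim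
    (hanti.mono (Set.Ici_subset_Ici.2 (hr₂ r₂ le_rfl).2))
    (tendsto_sqrt_mul_sSup_emdenFowlerRadius hR0 hR)
  · obtain ⟨⟨⟨hrt, hr3⟩, hy⟩, hr₁⟩ := hr₂ r hr
    rw [hf.abs_mul_defectGap_eq_R1 hB hut (by linarith) hrt hy]
    exact (le_add_of_nonneg_right (hR2 _)).trans (hle r hr₁)
  · obtain ⟨⟨⟨hrt, hr3⟩, -⟩, hr₁⟩ := hr₂ r hr
    rw [hf.abs_invB2_add_eq_R2 hB hut hr3 hrt]
    exact (le_add_of_nonneg_left (hR1 _)).trans (hle r hr₁)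

theorem exists_isEmdenFowlerSolution_atTop
    (hlim : Tendsto (fun s => deriv f s * Fint f s) atTop (nhds 1))
    (hB₂ : Tendsto (invB2 f (Fint f)) atTop (nhds (1 / B))) (ht₁ : 0 < t₁)
    (hR : Tendsto (fun t => √(-Real.log t) * (R1 f ut B t + R2 f ut B t))
      (nhdsWithin 0 (Set.Ioi 0)) (nhds 0)) :
    ∃ r₀ U P, IsEmdenFowlerSolution f U P (Set.Ici r₀) ∧ Tendsto U atTop atTop ∧
      ∃ C > 0, ∀ r, r₀ ≤ r → |U r - ut (emdenFowlerRadius r)| ≤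
        C * f (ut (emdenFowlerRadius r)) * Fint f (ut (emdenFowlerRadius r)) *
          sSup ((fun s => R1 f ut B s + R2 f ut B s) '' Set.Ioc 0 (emdenFowlerRadius r)) := by
  obtain ⟨r₀, ⟨⟨hproblem, hdomain⟩, hrt⟩, hr₀⟩ :=
    (((hf.eventually_isDeviationProblem_sSup hB hut hlim hB₂ ht₁ hR).and
      (eventually_forall_ge_atTop.2 (hf.eventually_tailInv_domain hB hlim hB₂))).and
        (eventually_forall_ge_atTop.2 ((tendsto_emdenFowlerRadius.mono_right
          nhdsWithin_le_nhds).eventually_lt_const ht₁))).and (eventually_gt_atTop 1) |>.exists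
  obtain ⟨φ, ψ, hφψ⟩ := hproblem.exists_solution
  have hmem (r : ℝ) (hr : r₀ ≤ r) : modelLevel B r + φ r ∈ logTail f '' Set.Ioi s₀ :=
    (hdomain r hr _ (by linarith [neg_le_of_abs_le (hφψ r hr).2.2.2])).1
  refine ⟨r₀, deviationProfile f s₀ B φ, deviationProfileDeriv f s₀ B φ ψ, fun r hr => ?_, ?_,
    Real.exp 1 * (130 * B), by positivity, fun r hr => ?_⟩
  · obtain ⟨hφ, hψ, -, -⟩ := hφψ r hr
    have hr0 : 0 < r := by linarith [Set.mem_Ici.1 hr]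
    exact ⟨hf.hasDerivAt_deviationProfile hB hr0 (hmem r hr) hφ,
      hf.hasDerivAt_deviationProfileDeriv hB hr0 (hmem r hr) hφ hψ⟩
  · refine hf.tendsto_tailInv.comp (tendsto_atTop_mono' atTop ?_
      (tendsto_atTop_add_const_right atTop (-1) (tendsto_modelLevel hB)))
    filter_upwards [eventually_ge_atTop r₀] with r hr
    linarith [neg_le_of_abs_le (hφψ r hr).2.2.2]
  · obtain ⟨-, -, hbound, hφ1⟩ := hφψ r hr
    have hA := hf.tailAmplitude_pos (hdomain r hr (modelLevel B r) (by linarith)).1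
    rw [deviationProfile, ← hf.tailInv_modelLevel hB hut (by linarith) (hrt r hr)]
    calc _ ≤ Real.exp 1 * tailAmplitude f s₀ (modelLevel B r) * |φ r| :=
          hf.abs_tailInv_add_sub_le (fun y hy => (hdomain r hr y hy).1)
            (fun y hy => (hdomain r hr y (by linarith)).2) hφ1
      _ ≤ Real.exp 1 * tailAmplitude f s₀ (modelLevel B r) * _ :=
          mul_le_mul_of_nonneg_left hbound (by positivity)
      _ = _ := by
          rw [tailAmplitude]
          ring

end ModelComparison

end IsTailRegular

/-! ### Backward extension to the first zero -/

section ShootingBack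

open Set

theorem exists_forall_mem_Icc_hasDerivWithinAt_of_norm_le {E : Type*} [NormedAddCommGroup E]
    [NormedSpace ℝ E] [CompleteSpace E] {v : ℝ → E → E} {a b : ℝ} {K M : NNReal}
    (hlip : ∀ t ∈ Icc a b, LipschitzWith K (v t)) (hcont : ∀ x, ContinuousOn (v · x) (Icc a b))
    (hM : ∀ t ∈ Icc a b, ∀ x, ‖v t x‖ ≤ M) (t₀ : Icc a b) (x₀ : E) :
    ∃ α : ℝ → E, α t₀ = x₀ ∧ ∀ t ∈ Icc a b, HasDerivWithinAt α (v t (α t)) (Icc a b) t :=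
  IsPicardLindelof.exists_eq_forall_mem_Icc_hasDerivWithinAt₀
    (a := M * (max (b - t₀) (t₀ - a)).toNNReal) (L := M) (K := K)
    { lipschitzOnWith := fun t ht => (hlip t ht).lipschitzOnWith
      continuousOn := fun x _ => hcont x
      norm_le := fun t ht x _ => hM t ht x
      mul_max_le := by
        rw [NNReal.coe_mul, NNReal.coe_zero, sub_zero]
        exact mul_le_mul_of_nonneg_left (Real.le_coe_toNNReal _) M.2 }

theorem exists_second_order_solution_Icc {g : ℝ → ℝ → ℝ} {a b : ℝ} {k M : NNReal} (hab : a ≤ b)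
    (hlip : ∀ r ∈ Icc a b, LipschitzWith k (g r)) (hcont : ∀ x, ContinuousOn (g · x) (Icc a b))
    (hM : ∀ r ∈ Icc a b, ∀ x, |g r x| ≤ M) (w q : ℝ) :
    ∃ W Q : ℝ → ℝ, W b = w ∧ Q b = q ∧ ∀ r ∈ Icc a b,
      HasDerivWithinAt W (Q r) (Icc a b) r ∧ HasDerivWithinAt Q (g r (W r)) (Icc a b) r := by
  -- Truncating the velocity at its a priori bound makes the vector field bounded.
  have hN : 0 ≤ M * (b - a) := mul_nonneg M.2 (sub_nonneg.2 hab)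
  have hclamp : q - M * (b - a) ≤ q + M * (b - a) := by linarith
  let p (y : ℝ) : ℝ := projIcc _ _ hclamp y
  have hp (y : ℝ) : |p y| ≤ |q| + M * (b - a) := by
    obtain ⟨h₁, h₂⟩ := (projIcc _ _ hclamp y).2
    rw [abs_le]
    exact ⟨by linarith [neg_abs_le q], by linarith [le_abs_self q]⟩
  obtain ⟨α, hα, hderiv⟩ := exists_forall_mem_Icc_hasDerivWithinAt_of_norm_le
    (v := fun r (x : ℝ × ℝ) => (p x.2, g r x.1)) (M := (|q| + M * (b - a)).toNNReal + M)
    (fun r hr => ((LipschitzWith.subtype_val _).comp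
      ((LipschitzWith.projIcc hclamp).comp LipschitzWith.prod_snd)).prodMk
        ((hlip r hr).comp LipschitzWith.prod_fst))
    (fun x => continuousOn_const.prodMk (hcont x.1))
    (fun r hr x => max_le
      (((hp _).trans (Real.le_coe_toNNReal _)).trans (le_add_of_nonneg_right M.2))
      ((hM r hr x.1).trans (le_add_of_nonneg_left (NNReal.coe_nonneg _))))
    ⟨b, right_mem_Icc.2 hab⟩ (w, q)
  have hQ (r : ℝ) (hr : r ∈ Icc a b) :
      HasDerivWithinAt (fun r => (α r).2) (g r (α r).1) (Icc a b) r := (hderiv r hr).snd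
  have hbound (r : ℝ) (hr : r ∈ Icc a b) : |(α r).2 - q| ≤ M * (b - a) := by
    have hdist := (convex_Icc a b).norm_image_sub_le_of_norm_hasDerivWithin_le hQ
      (fun s hs => hM s hs _) (right_mem_Icc.2 hab) hr
    simp only [hα, Real.norm_eq_abs, abs_sub_comm r, abs_of_nonneg (sub_nonneg.2 hr.2)] at hdist
    exact hdist.trans (mul_le_mul_of_nonneg_left (by linarith [hr.1]) M.2)
  refine ⟨fun r => (α r).1, fun r => (α r).2, congrArg Prod.fst hα, congrArg Prod.snd hα,
    fun r hr => ⟨?_, hQ r hr⟩⟩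
  have hpQ : p (α r).2 = (α r).2 := by
    obtain ⟨h₁, h₂⟩ := abs_le.1 (hbound r hr)
    exact congrArg Subtype.val (projIcc_of_mem hclamp ⟨by linarith, by linarith⟩)
  have hW : HasDerivWithinAt (fun r => (α r).1) (p (α r).2) (Icc a b) r := (hderiv r hr).fst
  rwa [hpQ] at hW

theorem mul_sub_le_sub_of_force_nonpos {W Q G : ℝ → ℝ} {a b x y : ℝ}
    (hW : ∀ r ∈ Icc a b, HasDerivWithinAt W (Q r) (Icc a b) r)
    (hQ : ∀ r ∈ Icc a b, HasDerivWithinAt Q (G r) (Icc a b) r) (hG : ∀ r ∈ Icc a b, G r ≤ 0)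
    (hx : x ∈ Icc a b) (hy : y ∈ Icc a b) (hxy : x ≤ y) : Q b * (y - x) ≤ W y - W x := by
  have hanti : AntitoneOn Q (Icc a b) :=
    antitoneOn_of_hasDerivWithinAt_nonpos (convex_Icc a b)
      (fun r hr => (hQ r hr).continuousWithinAt)
      (fun r hr => (hQ r (interior_subset hr)).mono interior_subset)
      fun r hr => hG r (interior_subset hr)
  refine (convex_Icc a b).mul_sub_le_image_sub_of_le_deriv
    (fun r hr => (hW r hr).continuousWithinAt)
    (fun r hr => ((hW r (interior_subset hr)).mono interior_subset).differentiableWithinAt)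
    (fun r hr => ?_) x hx y hy hxy
  rw [interior_Icc] at hr
  have hr' := Ioo_subset_Icc_self hr
  rw [((hW r hr').hasDerivAt (Icc_mem_nhds hr.1 hr.2)).deriv]
  exact hanti hr' (right_mem_Icc.2 (hr'.1.trans hr'.2)) hr'.2

theorem nonneg_of_continuousOn_Ici {f : ℝ → ℝ} {a : ℝ} (hf : ContinuousOn f (Ici a))
    (hpos : ∀ s > a, 0 ≤ f s) : ∀ s ∈ Ici a, 0 ≤ f s := by
  rw [← closure_Ioi a] at hf ⊢
  exact fun s hs => le_on_closure (fun x hx => hpos x hx) continuousOn_const hf hs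

theorem exists_nonpos_force_solution_Icc {f h : ℝ → ℝ} {a b w q : ℝ}
    (hf : LocallyLipschitzOn (Ici 0) f) (hf0 : ∀ s ∈ Ici 0, 0 ≤ f s) (hh : Continuous h)
    (hh0 : ∀ r, 0 ≤ h r) (hab : a ≤ b) (hw : 0 ≤ w) (hq : 0 ≤ q) :
    ∃ W Q : ℝ → ℝ, W b = w ∧ Q b = q ∧ ∀ r ∈ Icc a b, HasDerivWithinAt W (Q r) (Icc a b) r ∧
      HasDerivWithinAt Q (-(f (max 0 (W r)) * h r)) (Icc a b) r := by
  -- Concavity keeps `W` below `w`, so only the values of `f` on `[0, w]` matter.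
  let F (x : ℝ) : ℝ := f (projIcc 0 w hw x)
  have hsub : Icc 0 w ⊆ Ici (0 : ℝ) := Icc_subset_Ici_self
  have hF0 (x : ℝ) : 0 ≤ F x := hf0 _ (hsub (projIcc 0 w hw x).2)
  obtain ⟨k, hk⟩ := (hf.mono hsub).exists_lipschitzOnWith_of_compact isCompact_Icc
  obtain ⟨H, hH⟩ := isCompact_Icc.exists_bound_of_continuousOn (hf.continuousOn.mono hsub)
  obtain ⟨M, hM⟩ := isCompact_Icc.exists_bound_of_continuousOn (hh.continuousOn (s := Icc a b))
  have hFlip : LipschitzWith (k * 1) F := hk.to_restrict.comp (LipschitzWith.projIcc hw)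
  have hlip (r : ℝ) (hr : r ∈ Icc a b) :
      LipschitzWith (k * 1 * M.toNNReal) fun x => -(F x * h r) := by
    refine LipschitzWith.of_dist_le_mul fun x y => ?_
    have hhM : |h r| ≤ M.toNNReal := (hM r hr).trans (Real.le_coe_toNNReal M)
    rw [dist_neg_neg, Real.dist_eq, ← sub_mul, abs_mul, NNReal.coe_mul, mul_right_comm]
    exact mul_le_mul (hFlip.dist_le_mul x y) hhM (abs_nonneg _) (by positivity)
  have hbound (r : ℝ) (hr : r ∈ Icc a b) (x : ℝ) : |-(F x * h r)| ≤ (H * M).toNNReal := by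
    rw [abs_neg, abs_mul]
    exact (mul_le_mul (hH _ (projIcc 0 w hw x).2) (hM r hr) (abs_nonneg _)
      ((norm_nonneg _).trans (hH 0 ⟨le_rfl, hw⟩))).trans (Real.le_coe_toNNReal _)
  obtain ⟨W, Q, hW, hQ, hWQ⟩ := exists_second_order_solution_Icc hab hlip
    (fun x => (continuousOn_const.mul hh.continuousOn).neg) hbound w q
  refine ⟨W, Q, hW, hQ, fun r hr => ⟨(hWQ r hr).1, ?_⟩⟩
  have hfall : q * (b - r) ≤ w - W r :=
    hW ▸ hQ ▸ mul_sub_le_sub_of_force_nonpos (fun r hr => (hWQ r hr).1) (fun r hr => (hWQ r hr).2)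
      (fun r _ => neg_nonpos.2 (mul_nonneg (hF0 _) (hh0 r))) hr (right_mem_Icc.2 hab) hr.2
  have hWw : W r ≤ w := by linarith [mul_nonneg hq (sub_nonneg.2 hr.2)]
  have hFW : F (W r) = f (max 0 (W r)) := by
    simp only [F, coe_projIcc, min_eq_right hWw]
  exact hFW ▸ (hWQ r hr).2

theorem exists_backward_zero {f h : ℝ → ℝ} {b w q : ℝ} (hf : LocallyLipschitzOn (Ici 0) f)
    (hf0 : ∀ s ∈ Ici 0, 0 ≤ f s) (hh : Continuous h) (hh0 : ∀ r, 0 ≤ h r) (hw : 0 < w)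
    (hq : 0 < q) :
    ∃ (W Q : ℝ → ℝ) (a r₀ : ℝ), a < r₀ ∧ r₀ < b ∧ W b = w ∧ Q b = q ∧ W r₀ = 0 ∧
      (∀ r ∈ Ioc r₀ b, 0 < W r) ∧ ∀ r ∈ Icc a b, HasDerivWithinAt W (Q r) (Icc a b) r ∧
        HasDerivWithinAt Q (-(f (max 0 (W r)) * h r)) (Icc a b) r := by
  set a := b - w / q - 1 with ha
  have hab : a < b := by linarith [div_pos hw hq]
  obtain ⟨W, Q, hW, hQ, hWQ⟩ := exists_nonpos_force_solution_Icc hf hf0 hh hh0 hab.le hw.le hq.le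
  have hslope {x y : ℝ} (hx : x ∈ Icc a b) (hy : y ∈ Icc a b) (hxy : x ≤ y) :
      q * (y - x) ≤ W y - W x :=
    hQ ▸ mul_sub_le_sub_of_force_nonpos (fun r hr => (hWQ r hr).1) (fun r hr => (hWQ r hr).2)
      (fun r _ => neg_nonpos.2 (mul_nonneg (hf0 _ (mem_Ici.2 (le_max_left _ _))) (hh0 r))) hx hy hxy
  have hWa : W a < 0 := by
    have hfall := hslope (left_mem_Icc.2 hab.le) (right_mem_Icc.2 hab.le) hab.le
    have hlen : q * (b - a) = w + q := by
      rw [ha]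
      field_simp
      ring
    linarith
  obtain ⟨r₀, hr₀, hzero⟩ := intermediate_value_Ioo hab.le
    (fun r hr => (hWQ r hr).1.continuousWithinAt) ⟨hWa, hW ▸ hw⟩
  refine ⟨W, Q, a, r₀, hr₀.1, hr₀.2, hW, hQ, hzero, fun r hr => ?_, hWQ⟩
  have hrise := hslope (Ioo_subset_Icc_self hr₀) ⟨hr₀.1.le.trans hr.1.le, hr.2⟩ hr.1.le
  linarith [mul_pos hq (sub_pos.2 hr.1)]

theorem hasDerivAt_ite_le {E : Type*} [NormedAddCommGroup E] [NormedSpace ℝ E]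
    {f g f' g' : ℝ → E} {a b x : ℝ} (hfg : f b = g b) (hfg' : f' b = g' b)
    (hf : ∀ x ∈ Icc a b, HasDerivWithinAt f (f' x) (Icc a b) x)
    (hg : ∀ x ∈ Ici b, HasDerivAt g (g' x) x) (hx : a < x) :
    HasDerivAt (fun x => if x ≤ b then f x else g x) (if x ≤ b then f' x else g' x) x := by
  rcases lt_trichotomy x b with hxb | rfl | hbx
  · rw [if_pos hxb.le]
    refine ((hf x ⟨hx.le, hxb.le⟩).hasDerivAt (Icc_mem_nhds hx hxb)).congr_of_eventuallyEq ?_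
    filter_upwards [Iio_mem_nhds hxb] with y hy
    exact if_pos (le_of_lt hy)
  · rw [if_pos le_rfl]
    have hleft : HasDerivWithinAt (fun y => if y ≤ x then f y else g y) (f' x) (Icc a x) x :=
      (hf x ⟨hx.le, le_rfl⟩).congr (fun y hy => if_pos hy.2) (if_pos le_rfl)
    have hright : HasDerivWithinAt (fun y => if y ≤ x then f y else g y) (f' x) (Ici x) x := by
      rw [hfg']
      refine (hg x self_mem_Ici).hasDerivWithinAt.congr (fun y hy => ?_)
        (by rw [if_pos le_rfl, hfg])
      split_ifs with hyx
      · rw [le_antisymm hyx hy, hfg]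
      · rfl
    refine (hleft.union hright).hasDerivAt ?_
    rw [Icc_union_Ici_eq_Ici hx.le]
    exact Ici_mem_nhds hx
  · rw [if_neg hbx.not_ge]
    refine (hg x hbx.le).congr_of_eventuallyEq ?_
    filter_upwards [Ioi_mem_nhds hbx] with y hy
    exact if_neg (not_le.2 hy)

theorem exists_deriv_pos_of_tendsto_atTop {U P : ℝ → ℝ} {a : ℝ} (hU : Tendsto U atTop atTop)
    (hderiv : ∀ r ∈ Ici a, HasDerivAt U (P r) r) : ∃ r ∈ Ici a, 0 < P r := by
  by_contra! hcon
  have hanti : AntitoneOn U (Ici a) :=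
    antitoneOn_of_hasDerivWithinAt_nonpos (convex_Ici a)
      (fun r hr => (hderiv r hr).continuousAt.continuousWithinAt)
      (fun r hr => (hderiv r (interior_subset hr)).hasDerivWithinAt)
      fun r hr => hcon r (interior_subset hr)
  obtain ⟨r, hr, har⟩ := ((hU.eventually_gt_atTop (U a)).and (eventually_ge_atTop a)).exists
  exact hr.not_ge (hanti self_mem_Ici har har)

end ShootingBack

theorem IsEmdenFowlerSolution.exists_backward_extension {f U P : ℝ → ℝ} {b : ℝ}
    (hUP : IsEmdenFowlerSolution f U P (Set.Ici b)) (hf : LocallyLipschitzOn (Set.Ici 0) f)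
    (hf0 : ∀ s > 0, 0 ≤ f s) (hU : ∀ r ∈ Set.Ici b, 0 < U r) (hP : 0 < P b) :
    ∃ (V Q : ℝ → ℝ) (a r₀ : ℝ), a < r₀ ∧ r₀ < b ∧
      IsEmdenFowlerSolution (fun s => f (max 0 s)) V Q (Set.Ioi a) ∧ V r₀ = 0 ∧
      (∀ r, r₀ < r → 0 < V r) ∧ Set.EqOn V U (Set.Ioi b) := by
  obtain ⟨W, Q, a, r₀, har₀, hr₀, hW, hQ, hzero, hpos, hWQ⟩ :=
    exists_backward_zero (h := fun r => Real.exp (1 - r) / 4) (b := b) hf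
      (nonneg_of_continuousOn_Ici hf.continuousOn hf0) (by fun_prop) (fun r => by positivity)
      (hU b Set.self_mem_Ici) hP
  have hmax (r : ℝ) (hr : b ≤ r) : max 0 (U r) = U r := max_eq_right (hU r hr).le
  refine ⟨fun r => if r ≤ b then W r else U r, fun r => if r ≤ b then Q r else P r, a, r₀, har₀,
    hr₀, fun r hr => ⟨hasDerivAt_ite_le hW hQ (fun r hr => (hWQ r hr).1)
      (fun r hr => (hUP r hr).1) hr, ?_⟩, by simp only [if_pos hr₀.le, hzero], fun r hr => ?_,
    fun r hr => if_neg (not_le.2 hr)⟩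
  · have hglue := hasDerivAt_ite_le hQ (by simp only [hW, hmax b le_rfl, mul_div_assoc])
      (fun r hr => (hWQ r hr).2) (fun r hr => (hUP r hr).2) hr
    refine hglue.congr_deriv ?_
    beta_reduce
    split_ifs with hrb
    · rw [mul_div_assoc]
    · rw [hmax r (not_le.1 hrb).le]
  · dsimp only
    split_ifs with hrb
    · exact hpos r ⟨hr, hrb⟩
    · exact hU r (not_le.1 hrb).le

theorem emdenFowlerRadius_one_sub_two_mul_log {t : ℝ} (ht : 0 < t) :
    emdenFowlerRadius (1 - 2 * Real.log t) = t := by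
  rw [emdenFowlerRadius, sub_sub_cancel, mul_div_cancel_left₀ _ two_ne_zero, Real.exp_log ht]

theorem lt_emdenFowlerRadius_iff {r t : ℝ} (ht : 0 < t) :
    t < emdenFowlerRadius r ↔ r < 1 - 2 * Real.log t := by
  conv_lhs => rw [← emdenFowlerRadius_one_sub_two_mul_log ht]
  exact strictAnti_emdenFowlerRadius.lt_iff_gt

theorem contDiffOn_two_of_hasDerivAt {u u' u'' : ℝ → ℝ} {s : Set ℝ} (hs : IsOpen s)
    (hu : ∀ t ∈ s, HasDerivAt u (u' t) t) (hu' : ∀ t ∈ s, HasDerivAt u' (u'' t) t)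
    (hu'' : ContinuousOn u'' s) : ContDiffOn ℝ 2 u s := by
  have h₁ : ContDiffOn ℝ 1 u' s := by
    rw [← zero_add 1, contDiffOn_succ_iff_deriv_of_isOpen hs, contDiffOn_zero]
    exact ⟨fun t ht => (hu' t ht).differentiableAt.differentiableWithinAt, by simp,
      hu''.congr fun t ht => (hu' t ht).deriv⟩
  rw [← one_add_one_eq_two, contDiffOn_succ_iff_deriv_of_isOpen hs]
  exact ⟨fun t ht => (hu t ht).differentiableAt.differentiableWithinAt, by simp,
    h₁.congr fun t ht => (hu t ht).deriv⟩

theorem hasDerivAt_one_sub_two_mul_log {t : ℝ} (ht : t ≠ 0) :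
    HasDerivAt (fun t => 1 - 2 * Real.log t) (-2 / t) t := by
  simpa only [neg_div, div_eq_mul_inv, neg_mul] using
    ((Real.hasDerivAt_log ht).const_mul 2).const_sub 1

theorem tendsto_one_sub_two_mul_log :
    Tendsto (fun t => 1 - 2 * Real.log t) (nhdsWithin 0 (Set.Ioi 0)) atTop :=
  tendsto_atTop_add_const_left _ 1
    (tendsto_neg_atBot_atTop.comp (Real.tendsto_log_nhdsGT_zero.const_mul_atBot two_pos))

namespace IsEmdenFowlerSolution

variable {f U P : ℝ → ℝ} {a t : ℝ} (hUP : IsEmdenFowlerSolution f U P (Set.Ioi a))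

include hUP

theorem hasDerivAt_radial (ht : t ∈ Set.Ioo 0 (emdenFowlerRadius a)) :
    HasDerivAt (fun t => U (1 - 2 * Real.log t)) (-2 / t * P (1 - 2 * Real.log t)) t := by
  exact ((hUP _ ((lt_emdenFowlerRadius_iff ht.1).1 ht.2)).1.comp t
    (hasDerivAt_one_sub_two_mul_log ht.1.ne')).congr_deriv (mul_comm _ _)

theorem hasDerivAt_radial_deriv (ht : t ∈ Set.Ioo 0 (emdenFowlerRadius a)) :
    HasDerivAt (fun t => -2 / t * P (1 - 2 * Real.log t))
      (2 / t ^ 2 * P (1 - 2 * Real.log t) - f (U (1 - 2 * Real.log t))) t := by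
  have ht0 := ht.1.ne'
  have hinv : HasDerivAt (fun t : ℝ => -2 / t) (2 / t ^ 2) t :=
    ((hasDerivAt_const t (-2 : ℝ)).fun_div (hasDerivAt_id' t) ht0).congr_deriv (by ring)
  have hexp : Real.exp (1 - (1 - 2 * Real.log t)) = t ^ 2 := by
    rw [sub_sub_cancel, two_mul, Real.exp_add, Real.exp_log ht.1, sq]
  refine (hinv.fun_mul
    ((hUP _ ((lt_emdenFowlerRadius_iff ht.1).1 ht.2)).2.comp t
      (hasDerivAt_one_sub_two_mul_log ht0))).congr_deriv ?_
  rw [hexp, Function.comp_apply]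
  field_simp
  ring

theorem contDiffOn_radial (hf : ContinuousOn f (U '' Set.Ioi a)) :
    ContDiffOn ℝ 2 (fun t => U (1 - 2 * Real.log t)) (Set.Ioo 0 (emdenFowlerRadius a)) := by
  refine contDiffOn_two_of_hasDerivAt isOpen_Ioo (fun t ht => hUP.hasDerivAt_radial ht)
    (fun t ht => hUP.hasDerivAt_radial_deriv ht) ?_
  have hmaps : Set.MapsTo (fun t => 1 - 2 * Real.log t) (Set.Ioo 0 (emdenFowlerRadius a))
      (Set.Ioi a) := fun t ht => (lt_emdenFowlerRadius_iff ht.1).1 ht.2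
  have hlog : ContinuousOn (fun t => 1 - 2 * Real.log t) (Set.Ioo 0 (emdenFowlerRadius a)) :=
    continuousOn_const.sub (continuousOn_const.mul
      (Real.continuousOn_log.mono fun t ht => ht.1.ne'))
  have hU : ContinuousOn U (Set.Ioi a) := fun r hr => (hUP r hr).1.continuousAt.continuousWithinAt
  have hP : ContinuousOn P (Set.Ioi a) := fun r hr => (hUP r hr).2.continuousAt.continuousWithinAt
  have hinv : ContinuousOn (fun t : ℝ => 2 / t ^ 2) (Set.Ioo 0 (emdenFowlerRadius a)) :=
    continuousOn_const.div (by fun_prop) fun t ht => pow_ne_zero 2 ht.1.ne'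
  exact (hinv.mul (hP.comp hlog hmaps)).sub ((hf.comp hU (Set.mapsTo_image U _)).comp hlog hmaps)

theorem radial_equation (ht : t ∈ Set.Ioo 0 (emdenFowlerRadius a)) :
    deriv (deriv fun t => U (1 - 2 * Real.log t)) t +
      deriv (fun t => U (1 - 2 * Real.log t)) t / t + f (U (1 - 2 * Real.log t)) = 0 := by
  have hderiv : deriv (fun t => U (1 - 2 * Real.log t)) =ᶠ[nhds t]
      fun t => -2 / t * P (1 - 2 * Real.log t) := by
    filter_upwards [isOpen_Ioo.mem_nhds ht] with x hx
    exact (hUP.hasDerivAt_radial hx).deriv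
  rw [hderiv.deriv_eq, hderiv.eq_of_nhds, (hUP.hasDerivAt_radial_deriv ht).deriv]
  ring

omit hUP in
theorem exists_dirichlet_solution (hUP : IsEmdenFowlerSolution f U P (Set.Ici a))
    (hU : Tendsto U atTop atTop) (hf : LocallyLipschitzOn (Set.Ici 0) f)
    (hf0 : ∀ s > 0, 0 ≤ f s) :
    ∃ R > 0, ∃ u : ℝ → ℝ, ContDiffOn ℝ 2 u (Set.Ioc 0 R) ∧ (∀ t ∈ Set.Ioo 0 R, 0 < u t) ∧
      u R = 0 ∧ (∀ t ∈ Set.Ioo 0 R, deriv (deriv u) t + deriv u t / t + f (u t) = 0) ∧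
      Tendsto u (nhdsWithin 0 (Set.Ioi 0)) atTop ∧
      ∃ b ≥ a, emdenFowlerRadius b < R ∧
        ∀ t ∈ Set.Ioo 0 (emdenFowlerRadius b), u t = U (1 - 2 * Real.log t) := by
  obtain ⟨a', hpos⟩ := eventually_atTop.1 ((hU.eventually_gt_atTop 0).and (eventually_ge_atTop a))
  obtain ⟨b, hb : a' ≤ b, hslope⟩ := exists_deriv_pos_of_tendsto_atTop hU fun r hr =>
    (hUP r ((hpos a' le_rfl).2.trans hr)).1
  have hab : a ≤ b := (hpos b hb).2
  have hUP' : IsEmdenFowlerSolution f U P (Set.Ici b) := fun r hr => hUP r (hab.trans hr)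
  obtain ⟨V, Q, c, r₀, hc, hrb, hV, hV0, hVpos, hVU⟩ := hUP'.exists_backward_extension hf hf0
    (fun r hr => (hpos r (hb.trans hr)).1) hslope
  have hposV (t : ℝ) (ht : t ∈ Set.Ioo 0 (emdenFowlerRadius r₀)) :
      0 < V (1 - 2 * Real.log t) := hVpos _ ((lt_emdenFowlerRadius_iff ht.1).1 ht.2)
  have hcont : Continuous fun s => f (max 0 s) :=
    hf.continuousOn.comp_continuous (by fun_prop) fun s => le_max_left 0 s
  refine ⟨emdenFowlerRadius r₀, emdenFowlerRadius_pos r₀, fun t => V (1 - 2 * Real.log t),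
    (hV.contDiffOn_radial hcont.continuousOn).mono fun t ht =>
      ⟨ht.1, ht.2.trans_lt (strictAnti_emdenFowlerRadius hc)⟩, hposV, ?_, fun t ht => ?_,
    ?_, b, hab, strictAnti_emdenFowlerRadius hrb, fun t ht => ?_⟩
  · simpa only [one_sub_two_mul_log_emdenFowlerRadius] using hV0
  · simpa only [max_eq_right (hposV t ht).le] using hV.radial_equation
      ⟨ht.1, ht.2.trans (strictAnti_emdenFowlerRadius hc)⟩
  · exact (hU.congr' (hVU.symm.eventuallyEq_of_mem (Ioi_mem_atTop b))).comp
      tendsto_one_sub_two_mul_log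
  · exact hVU ((lt_emdenFowlerRadius_iff ht.1).1 ht.2)

end IsEmdenFowlerSolution

theorem stmt5_general {f ut : ℝ → ℝ} {s₀ B t₁ : ℝ} (hf : IsTailRegular f s₀) (hB : 1 ≤ B)
    (hlim : Tendsto (fun s => deriv f s * Fint f s) atTop (nhds 1))
    (hB₂ : Tendsto (invB2 f (Fint f)) atTop (nhds (1 / B))) (ht₁ : 0 < t₁)
    (hut : ∀ t ∈ Set.Ioo (0 : ℝ) t₁, s₀ < ut t ∧ Fint f (ut t) = modelG B (modelv B t))
    (hR : Tendsto (fun t => (-Real.log t) ^ ((1 : ℝ) / 2) * (R1 f ut B t + R2 f ut B t))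
      (nhdsWithin 0 (Set.Ioi 0)) (nhds 0))
    (hlip : LocallyLipschitzOn (Set.Ici 0) f) (hf0 : ∀ s > 0, 0 ≤ f s) :
    ∃ R > (0 : ℝ), ∃ u : ℝ → ℝ,
      ContDiffOn ℝ 2 u (Set.Ioc 0 R) ∧
      (∀ t ∈ Set.Ioo (0 : ℝ) R, 0 < u t) ∧
      u R = 0 ∧
      (∀ t ∈ Set.Ioo (0 : ℝ) R, deriv (deriv u) t + deriv u t / t + f (u t) = 0) ∧
      Tendsto u (nhdsWithin 0 (Set.Ioi 0)) atTop ∧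
      ∃ r₀ ∈ Set.Ioo (0 : ℝ) R, ∃ C > (0 : ℝ),
        ∀ t ∈ Set.Ioo (0 : ℝ) r₀,
          |u t - ut t| ≤ C * f (ut t) * Fint f (ut t) *
            sSup ((fun s => R1 f ut B s + R2 f ut B s) '' Set.Ioc 0 t) := by
  simp only [← Real.sqrt_eq_rpow] at hR
  obtain ⟨a, U, P, hUP, hU, C, hC, hest⟩ :=
    hf.exists_isEmdenFowlerSolution_atTop hB hut hlim hB₂ ht₁ hR
  obtain ⟨R, hR0, u, hu, hpos, huR, heq, htop, b, hab, hbR, huU⟩ :=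
    hUP.exists_dirichlet_solution hU hlip hf0
  refine ⟨R, hR0, u, hu, hpos, huR, heq, htop, emdenFowlerRadius b,
    ⟨emdenFowlerRadius_pos b, hbR⟩, C, hC, fun t ht => ?_⟩
  have hest_t := hest _ (hab.trans ((lt_emdenFowlerRadius_iff ht.1).1 ht.2).le)
  rwa [emdenFowlerRadius_one_sub_two_mul_log ht.1, ← huU t ht] at hest_t

/-- Theorem 1.1: under (f1), (f2), assumption (1.1a), and global regularity and
positivity of `f` on `[0,∞)`, the Dirichlet problem in radial form has a positive
singular solution `u` on `(0,R]` with `u(R) = 0`, blowing up at the origin and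
approximated by `ũ` near `0`. -/
theorem stmt5 (f ut : ℝ → ℝ) (s₀ B t₁ : ℝ) (hs₀ : 0 < s₀)
    (hf : ContDiffOn ℝ 2 f (Set.Ioi s₀))
    (hfpos : ∀ s, s₀ < s → 0 < f s)
    (hf' : ∀ s, s₀ < s → 0 < deriv f s)
    (hfint : ∀ s, s₀ < s → IntegrableOn (fun τ => 1 / f τ) (Set.Ioi s))
    (hB : 1 ≤ B)
    (hf2a : Tendsto (fun s => deriv f s * Fint f s) atTop (nhds 1))
    (hf2b : Tendsto (fun s => invB2 f (Fint f) s) atTop (nhds (1 / B)))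
    (ht₁ : t₁ ∈ Set.Ioo (0 : ℝ) 1)
    (hut : ∀ t ∈ Set.Ioo (0 : ℝ) t₁, s₀ < ut t ∧ Fint f (ut t) = modelG B (modelv B t))
    (h11a : Tendsto (fun t => (-Real.log t) ^ ((1 : ℝ) / 2) * (R1 f ut B t + R2 f ut B t))
      (nhdsWithin 0 (Set.Ioi 0)) (nhds 0))
    (hfC1 : ContDiffOn ℝ 1 f (Set.Ici 0))
    (hfpos0 : ∀ s > (0 : ℝ), 0 < f s)
    (hf'0 : ∀ s > (0 : ℝ), 0 < deriv f s)
    (hfint0 : ∀ s > (0 : ℝ), IntegrableOn (fun τ => 1 / f τ) (Set.Ioi s)) :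
    ∃ R > (0 : ℝ), ∃ u : ℝ → ℝ,
      ContDiffOn ℝ 2 u (Set.Ioc 0 R) ∧
      (∀ t ∈ Set.Ioo (0 : ℝ) R, 0 < u t) ∧
      u R = 0 ∧
      (∀ t ∈ Set.Ioo (0 : ℝ) R, deriv (deriv u) t + deriv u t / t + f (u t) = 0) ∧
      Tendsto u (nhdsWithin 0 (Set.Ioi 0)) atTop ∧
      ∃ r₀ ∈ Set.Ioo (0 : ℝ) R, ∃ C > (0 : ℝ),
        ∀ t ∈ Set.Ioo (0 : ℝ) r₀,
          |u t - ut t| ≤ C * f (ut t) * Fint f (ut t) *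
            sSup ((fun s => R1 f ut B s + R2 f ut B s) '' Set.Ioc 0 t) := by
  exact stmt5_general ⟨hf, hfpos, hf', hfint⟩ hB hf2a hf2b ht₁.1 hut h11a
    (hfC1.locallyLipschitzOn (convex_Ici 0)) fun s hs => (hfpos0 s hs).le
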